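/- Let T > 0, ℓ > 0, α ∈ (0,1), and let a, f be continuous on [0,T]×[−ℓ,ℓ]×ℝ×ℝ and b(·,±ℓ,·,·), g(·,±ℓ,·,·) continuous on [0,T]×ℝ×ℝ with a > 0 and b(·,±ℓ,·,·) > 0. Let u⁰ ∈ C^{1+α}([−ℓ,ℓ]) be Lipschitz with constant K, let M > 0, and suppose there are q₀ ≥ K and ψ ∈ C¹([0,∞),[1,∞)) with ∫_{q₀}^{∞} ρ/ψ(ρ) dρ > 2M such that |f(t,x,z,p)| ≤ a(t,x,z,p)ψ(|p|) for (t,x) ∈ closure(Ω_T), z ∈ [−M,M], p ∈ ℝ, and ±g(t,ℓ,z,±p) ≤ b(t,ℓ,z,±p)·p and ∓g(t,−ℓ,z,±p) ≤ b(t,−ℓ,z,±p)·p for t ∈ (0,T], z ∈ [−M,M], p ≥ q₀. Then there exist numbers δ ∈ (0,α] and C* > 0, independent of τ and of the solution, such that: if τ ≤ T and u ∈ C^{1,2}(closure(Ω_τ)) is any classical solution of (1),(2) on Ω_τ with u(0,·) = u⁰ and sup_{Ω_τ}|u| ≤ M, then ⟨u_x⟩^{(δ/2,δ)}_{Ω_τ}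 ≤ C*. -/

import Mathlib

/-!
The estimate combines a gradient bound, a reflection across the lateral boundary, and an interior
Hölder estimate for the gradient that uses no regularity of the coefficient `a`.

*Gradient bound.* The integral condition yields a function `φ` with `φ'' < -ψ(φ')`, slopes in
`[q₀, q₁]` and `φ(s1) > 2M` (`exists_barrier`). Doubling of variables gives
`u(t,x) - u(t,y) ≤ φ(x - y)` (`osc_le_barrier`): at a positive maximum of the difference the equation
inside, or the boundary condition together with the sign condition on `g` at slopes `≥ q₀`,
contradicts the growth in time. Hence `|u_x| ≤ q₁` (`gradient_bound`).

*Reflection.* Now the coefficients range over a compact set, so `λ ≤ a ≤ Λ`, and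
`u_t(t, ±ℓ) = g ∓ b u_x` is bounded. Therefore the odd reflection `U` of `u` in the boundary points
`(±ℓ, u(t, ±ℓ))` of its graph satisfies `|U_t - A U_xx| ≤ 3F` with some `λ ≤ A ≤ Λ` on
`(-3ℓ, 3ℓ)`, and `U_x` is the even reflection of `u_x` (`oddExt_extSol`). The boundary has become an
interior set.

*Interior estimate.* Normalize `U` on a parabolic cylinder so that `0 ≤ U_x ≤ 1`. Either `U` or
`x - U` rises by at least `1/2` over the middle half of the cylinder at the initial time. For that
function the doubled function `U(t,x) - U(t,y)` is a nonnegative supersolution on `{x ≥ y}` up to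
a small error, of size at least `1/4` near `(1/2, -1/2)` initially. A barrier supported in a ball
which moves from there and finally touches the diagonal shows that it grows linearly away from the
diagonal (`barrier_compare`), that is, `U_x ≥ θ` on a smaller cylinder (`slope_bound`). So the
oscillation of `U_x` decays by the factor `1 - θ` when the radius is divided by `4` (`osc_step`), for
cylinders meeting the initial time by means of the Hölder continuity of the initial gradient, and
iteration gives Hölder continuity (`holder_of_extSol`).
-/

open Set Filter MeasureTheory
open scoped Topology

noncomputable section

/-- The time derivative `u_t` of a function `u = u(t,x)`. -/
def timeDeriv (u : ℝ → ℝ → ℝ) (t x : ℝ) : ℝ := deriv (fun s => u s x) t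

/-- The spatial derivative `u_x` of a function `u = u(t,x)`. -/
def spaceDeriv (u : ℝ → ℝ → ℝ) (t x : ℝ) : ℝ := deriv (fun y => u t y) x

/-- The second spatial derivative `u_{xx}` of a function `u = u(t,x)`. -/
def spaceDeriv2 (u : ℝ → ℝ → ℝ) (t x : ℝ) : ℝ := deriv (fun y => spaceDeriv u t y) x

/-- `v` is uniformly `β`-Hölder continuous on `I` with constant `C`. -/
def HolderBnd (β : ℝ) (I : Set ℝ) (v : ℝ → ℝ) (C : ℝ) : Prop :=
  ∀ s ∈ I, ∀ s' ∈ I, |v s - v s'| ≤ C * |s - s'| ^ β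

/-- The `β`-Hölder seminorm `[v]^{(β)}_I`. -/
def hSemi (β : ℝ) (I : Set ℝ) (v : ℝ → ℝ) : ℝ :=
  sSup ((fun p : ℝ × ℝ => |v p.1 - v p.2| / |p.1 - p.2| ^ β) ''
    {p : ℝ × ℝ | p.1 ∈ I ∧ p.2 ∈ I ∧ p.1 ≠ p.2})

/-- The sup-norm of `v` on `I`. -/
def supI (I : Set ℝ) (v : ℝ → ℝ) : ℝ := sSup ((fun s => |v s|) '' I)

/-- The `C^β` norm `|v|^{(β)}_I`. -/
def hNorm (β : ℝ) (I : Set ℝ) (v : ℝ → ℝ) : ℝ := supI I v + hSemi β I v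

/-- The sup-norm of `w` on `(0,τ) × Q`. -/
def supN (τ : ℝ) (Q : Set ℝ) (w : ℝ → ℝ → ℝ) : ℝ :=
  sSup ((fun p : ℝ × ℝ => |w p.1 p.2|) '' (Ioo 0 τ ×ˢ Q))

/-- The parabolic Hölder seminorm `⟨w⟩^{(β/2,β)}_{(0,τ)×Q}`. -/
def pSemi (β τ : ℝ) (Q : Set ℝ) (w : ℝ → ℝ → ℝ) : ℝ :=
  sSup ((fun x => hSemi (β / 2) (Ioo 0 τ) (fun t => w t x)) '' Q) +
    sSup ((fun t => hSemi β Q (fun x => w t x)) '' (Ioo 0 τ))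

/-- Componentwise bound `C` for the parabolic Hölder seminorm `⟨w⟩^{(β/2,β)}_{(0,τ)×Q}`. -/
def PHolderBnd (β τ : ℝ) (Q : Set ℝ) (w : ℝ → ℝ → ℝ) (C : ℝ) : Prop :=
  (∀ x ∈ Q, HolderBnd (β / 2) (Ioo 0 τ) (fun t => w t x) C) ∧
    ∀ t ∈ Ioo (0 : ℝ) τ, HolderBnd β Q (fun x => w t x) C

/-- The norm `|w|^{(β/2,β)}_{(0,τ)×Q}`. -/
def pNorm0 (β τ : ℝ) (Q : Set ℝ) (w : ℝ → ℝ → ℝ) : ℝ := supN τ Q w + pSemi β τ Q w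

/-- The leading parabolic seminorm `⟨u⟩^{(1+α/2,2+α)}_{(0,τ)×Q}`. -/
def pSemi2 (α τ : ℝ) (Q : Set ℝ) (u : ℝ → ℝ → ℝ) : ℝ :=
  pSemi α τ Q (timeDeriv u) + pSemi α τ Q (spaceDeriv2 u) +
    sSup ((fun x => hSemi ((1 + α) / 2) (Ioo 0 τ) (fun t => spaceDeriv u t x)) '' Q)

/-- The parabolic Hölder norm `|u|^{(1+α/2,2+α)}_{(0,τ)×Q}`. -/
def pNorm2 (α τ : ℝ) (Q : Set ℝ) (u : ℝ → ℝ → ℝ) : ℝ :=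
  supN τ Q u + supN τ Q (timeDeriv u) + supN τ Q (spaceDeriv u) +
    supN τ Q (spaceDeriv2 u) + pSemi2 α τ Q u

/-- `C^{1,2}`-regularity (existence of `u_t`, `u_x`, `u_{xx}`) on `(0,τ) × Q`. -/
def Reg12 (τ : ℝ) (Q : Set ℝ) (u : ℝ → ℝ → ℝ) : Prop :=
  ∀ t ∈ Ioo (0 : ℝ) τ, ∀ x ∈ Q,
    DifferentiableAt ℝ (fun s => u s x) t ∧
      DifferentiableAt ℝ (fun y => u t y) x ∧
        DifferentiableAt ℝ (fun y => spaceDeriv u t y) x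

/-- Membership in the parabolic Hölder space `C^{1+α/2,2+α}((0,τ)×Q)`. -/
def MemP (α τ : ℝ) (Q : Set ℝ) (u : ℝ → ℝ → ℝ) : Prop :=
  ContinuousOn (fun p : ℝ × ℝ => u p.1 p.2) (Icc 0 τ ×ˢ closure Q) ∧
    Reg12 τ (closure Q) u ∧
      ∃ C : ℝ,
        (∀ t ∈ Ioo (0 : ℝ) τ, ∀ x ∈ Q,
          |u t x| ≤ C ∧ |timeDeriv u t x| ≤ C ∧ |spaceDeriv u t x| ≤ C ∧
            |spaceDeriv2 u t x| ≤ C) ∧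
          PHolderBnd α τ Q (timeDeriv u) C ∧ PHolderBnd α τ Q (spaceDeriv2 u) C ∧
            ∀ x ∈ Q, HolderBnd ((1 + α) / 2) (Ioo 0 τ) (fun t => spaceDeriv u t x) C

/-- Membership in `C^{2+α}([-ℓ,ℓ])`. -/
def MemC2 (α ℓ : ℝ) (v : ℝ → ℝ) : Prop :=
  ContinuousOn v (Icc (-ℓ) ℓ) ∧
    (∀ x ∈ Icc (-ℓ) ℓ, DifferentiableAt ℝ v x ∧ DifferentiableAt ℝ (deriv v) x) ∧
      ContinuousOn (deriv (deriv v)) (Icc (-ℓ) ℓ) ∧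
        ∃ C : ℝ, HolderBnd α (Icc (-ℓ) ℓ) (deriv (deriv v)) C

/-- The `C^{2+α}([-ℓ,ℓ])` norm. -/
def c2Norm (α ℓ : ℝ) (v : ℝ → ℝ) : ℝ :=
  supI (Icc (-ℓ) ℓ) v + supI (Icc (-ℓ) ℓ) (deriv v) + supI (Icc (-ℓ) ℓ) (deriv (deriv v)) +
    hSemi α (Icc (-ℓ) ℓ) (deriv (deriv v))

/-- Regularity of a classical solution on `(0,τ) × (-ℓ,ℓ)` for a problem with dynamical
boundary conditions at `x = ±ℓ`: continuity on the closed cylinder, interior `C^{1,2}`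
regularity and existence of `u_t` and `u_x` at the lateral boundary. -/
def ClassicalReg (τ ℓ : ℝ) (u : ℝ → ℝ → ℝ) : Prop :=
  ContinuousOn (fun p : ℝ × ℝ => u p.1 p.2) (Icc 0 τ ×ˢ Icc (-ℓ) ℓ) ∧
    Reg12 τ (Ioo (-ℓ) ℓ) u ∧
      ∀ t ∈ Ioo (0 : ℝ) τ,
        DifferentiableAt ℝ (fun s => u s ℓ) t ∧ DifferentiableAt ℝ (fun y => u t y) ℓ ∧
          DifferentiableAt ℝ (fun s => u s (-ℓ)) t ∧ DifferentiableAt ℝ (fun y => u t y) (-ℓ)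

/-- `u` is a classical solution on `(0,τ) × (-ℓ,ℓ)` of the quasilinear equation (1) with the
gradient-dependent dynamical boundary conditions (2) and initial value `u0`. -/
def SolQ (τ ℓ : ℝ) (a f b g : ℝ → ℝ → ℝ → ℝ → ℝ) (u0 : ℝ → ℝ) (u : ℝ → ℝ → ℝ) : Prop :=
  ClassicalReg τ ℓ u ∧
    (∀ t ∈ Ioo (0 : ℝ) τ, ∀ x ∈ Ioo (-ℓ) ℓ,
      timeDeriv u t x - a t x (u t x) (spaceDeriv u t x) * spaceDeriv2 u t x
        = f t x (u t x) (spaceDeriv u t x)) ∧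
      (∀ t ∈ Ioo (0 : ℝ) τ,
        timeDeriv u t ℓ + b t ℓ (u t ℓ) (spaceDeriv u t ℓ) * spaceDeriv u t ℓ
            = g t ℓ (u t ℓ) (spaceDeriv u t ℓ) ∧
          timeDeriv u t (-ℓ) - b t (-ℓ) (u t (-ℓ)) (spaceDeriv u t (-ℓ)) * spaceDeriv u t (-ℓ)
            = g t (-ℓ) (u t (-ℓ)) (spaceDeriv u t (-ℓ))) ∧
        ∀ x ∈ Icc (-ℓ) ℓ, u 0 x = u0 x

/-- `u` is a classical solution on `(0,τ) × (-ℓ,ℓ)` of the quasilinear equation (1) with the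
gradient-independent dynamical boundary conditions (2a) and initial value `u0`. -/
def SolQ2a (τ ℓ : ℝ) (a f : ℝ → ℝ → ℝ → ℝ → ℝ) (b g : ℝ → ℝ → ℝ → ℝ) (u0 : ℝ → ℝ)
    (u : ℝ → ℝ → ℝ) : Prop :=
  ClassicalReg τ ℓ u ∧
    (∀ t ∈ Ioo (0 : ℝ) τ, ∀ x ∈ Ioo (-ℓ) ℓ,
      timeDeriv u t x - a t x (u t x) (spaceDeriv u t x) * spaceDeriv2 u t x
        = f t x (u t x) (spaceDeriv u t x)) ∧
      (∀ t ∈ Ioo (0 : ℝ) τ,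
        timeDeriv u t ℓ + b t ℓ (u t ℓ) * spaceDeriv u t ℓ = g t ℓ (u t ℓ) ∧
          timeDeriv u t (-ℓ) - b t (-ℓ) (u t (-ℓ)) * spaceDeriv u t (-ℓ) = g t (-ℓ) (u t (-ℓ))) ∧
        ∀ x ∈ Icc (-ℓ) ℓ, u 0 x = u0 x

/-! ### One-sided derivative tests -/

lemma deriv_nonneg_of_left_max {f : ℝ → ℝ} {w t t' : ℝ} (h : HasDerivWithinAt f w (Iic t) t)
    (ht : t' < t) (hmax : ∀ s ∈ Icc t' t, f s ≤ f t) : 0 ≤ w := by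
  have h1 : HasDerivWithinAt f w (Iio t) t := h.mono Iio_subset_Iic_self
  have h2 := hasDerivWithinAt_iff_tendsto_slope' (by simp) |>.1 h1
  refine ge_of_tendsto h2 ?_
  filter_upwards [Ioo_mem_nhdsLT ht] with s hs
  rw [slope_def_field]
  exact div_nonneg_of_nonpos (sub_nonpos.2 (hmax s ⟨hs.1.le, hs.2.le⟩)) (by linarith [hs.2])

lemma deriv_nonpos_of_right_max {f : ℝ → ℝ} {w t t' : ℝ} (h : HasDerivWithinAt f w (Ici t) t)
    (ht : t < t') (hmax : ∀ s ∈ Icc t t', f s ≤ f t) : w ≤ 0 := by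
  have h1 : HasDerivWithinAt f w (Ioi t) t := h.mono Ioi_subset_Ici_self
  have h2 := hasDerivWithinAt_iff_tendsto_slope' (by simp) |>.1 h1
  refine le_of_tendsto h2 ?_
  filter_upwards [Ioo_mem_nhdsGT ht] with s hs
  rw [slope_def_field]
  exact div_nonpos_of_nonpos_of_nonneg (sub_nonpos.2 (hmax s ⟨hs.1.le, hs.2.le⟩))
    (by linarith [hs.1])

/-- Second derivative test at a local maximum of `f` with `f' = g`. Only a one-sided derivative `k`
of `g` is needed: if `k > 0`, then `f` is strictly monotone on that side and moves above `f x`. -/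
lemma second_deriv_nonpos {f g : ℝ → ℝ} {k x : ℝ} (hd : ∀ᶠ y in 𝓝 x, HasDerivAt f (g y) y)
    (hmax : IsLocalMax f x)
    (hk : HasDerivWithinAt g k (Ici x) x ∨ HasDerivWithinAt g k (Iic x) x) : k ≤ 0 := by
  by_contra! hk0
  have hg0 : g x = 0 := hmax.hasDerivAt_eq_zero hd.self_of_nhds
  obtain ⟨e, he, hball⟩ := Metric.eventually_nhds_iff.1 (hd.and hmax)
  rcases hk with hk | hk
  · have h1 : HasDerivWithinAt g k (Ioi x) x := hk.mono Ioi_subset_Ici_self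
    have h2 := hasDerivWithinAt_iff_tendsto_slope' (by simp) |>.1 h1
    have h3 := h2.eventually (lt_mem_nhds hk0)
    obtain ⟨x', hx', hI⟩ := mem_nhdsGT_iff_exists_Ioo_subset.1 h3
    set d := min (e / 2) ((x' - x) / 2) with hdd
    have hdpos : 0 < d := lt_min (by linarith) (by linarith [mem_Ioi.1 hx'])
    have hde : d ≤ e / 2 := min_le_left _ _
    have hdx : d ≤ (x' - x) / 2 := min_le_right _ _
    have hnear : ∀ y ∈ Icc x (x + d), dist y x < e := fun y hy => by
      rw [Real.dist_eq, abs_lt]; constructor <;> linarith [hy.1, hy.2]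
    have hmono : StrictMonoOn f (Icc x (x + d)) := by
      apply strictMonoOn_of_deriv_pos (convex_Icc _ _)
      · intro y hy
        exact (hball (hnear y hy)).1.continuousAt.continuousWithinAt
      · intro y hy
        rw [interior_Icc] at hy
        rw [(hball (hnear y (Ioo_subset_Icc_self hy))).1.deriv]
        have := hI (show y ∈ Ioo x x' from ⟨hy.1, by linarith [hy.2, mem_Ioi.1 hx']⟩)
        simp only [mem_ofPred_eq, slope_def_field, hg0, sub_zero] at this
        exact (div_pos_iff_of_pos_right (by linarith [hy.1])).1 this
    have := hmono ⟨le_rfl, by linarith⟩ ⟨by linarith, le_rfl⟩ (by linarith : x < x + d)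
    have := (hball (hnear (x + d) ⟨by linarith, le_rfl⟩)).2
    linarith
  · have h1 : HasDerivWithinAt g k (Iio x) x := hk.mono Iio_subset_Iic_self
    have h2 := hasDerivWithinAt_iff_tendsto_slope' (by simp) |>.1 h1
    have h3 := h2.eventually (lt_mem_nhds hk0)
    obtain ⟨x', hx', hI⟩ := mem_nhdsLT_iff_exists_Ioo_subset.1 h3
    set d := min (e / 2) ((x - x') / 2) with hdd
    have hdpos : 0 < d := lt_min (by linarith) (by linarith [mem_Iio.1 hx'])
    have hde : d ≤ e / 2 := min_le_left _ _
    have hdx : d ≤ (x - x') / 2 := min_le_right _ _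
    have hnear : ∀ y ∈ Icc (x - d) x, dist y x < e := fun y hy => by
      rw [Real.dist_eq, abs_lt]; constructor <;> linarith [hy.1, hy.2]
    have hmono : StrictAntiOn f (Icc (x - d) x) := by
      apply strictAntiOn_of_deriv_neg (convex_Icc _ _)
      · intro y hy
        exact (hball (hnear y hy)).1.continuousAt.continuousWithinAt
      · intro y hy
        rw [interior_Icc] at hy
        rw [(hball (hnear y (Ioo_subset_Icc_self hy))).1.deriv]
        have := hI (show y ∈ Ioo x' x from ⟨by linarith [hy.1, mem_Iio.1 hx'], hy.2⟩)
        simp only [mem_ofPred_eq, slope_def_field, hg0, sub_zero] at this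
        by_contra! hc
        have h5 := div_nonpos_of_nonneg_of_nonpos hc (by linarith [hy.2] : y - x ≤ 0)
        linarith
    have := hmono ⟨le_rfl, by linarith⟩ ⟨by linarith, le_rfl⟩ (by linarith : x - d < x)
    have := (hball (hnear (x - d) ⟨le_rfl, by linarith⟩)).2
    linarith

/-! ### A moving-ball barrier for the doubled function -/

/-- At `(t, x)` the pair `u`, `v = u_x` satisfies `|u_t - A v_x| ≤ F` for some `A ∈ [lam, Lam]`.
No regularity of `A` in `(t, x)` is assumed. The derivative `v_x` is only one-sided, on a side of
choice, because the reflected solution has a gradient with kinks at the reflection points. -/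
def EqAt (lam Lam F : ℝ) (u v : ℝ → ℝ → ℝ) (t x : ℝ) : Prop :=
  ∃ A k w : ℝ, lam ≤ A ∧ A ≤ Lam ∧
    (HasDerivWithinAt (v t) k (Ici x) x ∨ HasDerivWithinAt (v t) k (Iic x) x) ∧
      HasDerivAt (fun s => u s x) w t ∧ |w - A * k| ≤ F


/-- For `w = 1/128 - |(x, y) - C(t)|²`, with a centre of velocity `(V1, V2)`, the function
`e^{-Kt}(w + k w²)` is a strict subsolution of `∂_t - A ∂_xx - B ∂_yy` inside the ball `w ≥ 0`. The
variables `x`, `y` are relative to the centre. Near the sphere the Hessian of `k w²` dominates, as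
`x² + y²` is close to `1/128` there; in the interior the zeroth-order term `K w` does. -/
lemma barrier_algebra {lam Lam A B k K x y V1 V2 w : ℝ} (hlam : 0 < lam) (hA : lam ≤ A)
    (hA' : A ≤ Lam) (hB : lam ≤ B) (hB' : B ≤ Lam) (hk : 0 < k)
    (hklam : k * lam = 16 * (4 * Lam + 2)) (hK : K = 8 * k * lam + 8 * k * Lam + 2 * k)
    (hw : w = 1 / 128 - x ^ 2 - y ^ 2) (hw0 : 0 ≤ w) (hV1 : |V1| ≤ 2) (hV2 : |V2| ≤ 2) :
    1 ≤ K * (w + k * w ^ 2) + A * (-(2 * (1 + 2 * k * w)) + 8 * k * x ^ 2)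
      + B * (-(2 * (1 + 2 * k * w)) + 8 * k * y ^ 2)
      - (1 + 2 * k * w) * (2 * x * V1 + 2 * y * V2) := by
  have hkw : 0 ≤ k * w := by positivity
  have hV : 2 * x * V1 + 2 * y * V2 ≤ 1 := by
    have hx : |x| ≤ 1 / 8 := abs_le_of_sq_le_sq (by nlinarith [sq_nonneg y]) (by norm_num)
    have hy : |y| ≤ 1 / 8 := abs_le_of_sq_le_sq (by nlinarith [sq_nonneg x]) (by norm_num)
    have h1 : x * V1 ≤ 1 / 8 * 2 := (le_abs_self _).trans (by rw [abs_mul]; gcongr)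
    have h2 : y * V2 ≤ 1 / 8 * 2 := (le_abs_self _).trans (by rw [abs_mul]; gcongr)
    linarith
  have e1 : (1 + 2 * (k * w)) * (2 * x * V1 + 2 * y * V2) ≤ (1 + 2 * (k * w)) * 1 := by
    gcongr
  have e2 : A * (2 * (1 + 2 * (k * w))) ≤ Lam * (2 * (1 + 2 * (k * w))) := by gcongr
  have e3 : B * (2 * (1 + 2 * (k * w))) ≤ Lam * (2 * (1 + 2 * (k * w))) := by gcongr
  have e4 : lam * (8 * k * x ^ 2) ≤ A * (8 * k * x ^ 2) := by gcongr
  have e5 : lam * (8 * k * y ^ 2) ≤ B * (8 * k * y ^ 2) := by gcongr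
  have e6 : K * w ≤ K * (w + k * w ^ 2) := by
    have : 0 ≤ K := by rw [hK]; have : 0 < Lam := by linarith
                       positivity
    have : 0 ≤ k * w ^ 2 := by positivity
    gcongr; linarith
  have e7 : lam * (8 * k * x ^ 2) + lam * (8 * k * y ^ 2)
      = (k * lam) * (1 / 16) - 8 * k * lam * w := by rw [hw]; ring
  have e8 : K * w = 8 * k * lam * w + 8 * Lam * (k * w) + 2 * (k * w) := by rw [hK]; ring
  rw [hklam] at e7
  have e9 : (1 + 2 * k * w) = 1 + 2 * (k * w) := by ring
  rw [e9]
  linarith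

/-- Comparison for the doubled function `Z(t,x,y) = u(t,x) - u(t,y)`, which satisfies
`Z_t - A Z_xx - B Z_yy ≥ -2θ`: it stays above the subsolution `c e^{-K(t-t1)}(w + k w²)` of
`barrier_algebra` in a moving ball `{w ≥ 0}` that lies in `{x ≥ y}`. On the sphere `w = 0` this holds
because `u` is nondecreasing in `x`, so that `Z ≥ 0` there. -/
lemma barrier_compare {lam Lam k K c θ t1 tb V1 V2 : ℝ} {C1 C2 : ℝ → ℝ} {u v : ℝ → ℝ → ℝ}
    (hlam : 0 < lam) (hLam : lam ≤ Lam) (hk : 0 < k)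
    (hklam : k * lam = 16 * (4 * Lam + 2)) (hK : K = 8 * k * lam + 8 * k * Lam + 2 * k)
    (hc : 0 < c) (hck : c * (1 + k) ≤ 1 / 4) (hθ : 2 * θ < c * Real.exp (-K))
    (htb : tb ≤ t1 + 1) (hV1 : |V1| ≤ 2) (hV2 : |V2| ≤ 2)
    (hC1 : ∀ t, HasDerivAt C1 V1 t) (hC2 : ∀ t, HasDerivAt C2 V2 t)
    (hsub : ∀ t ∈ Icc t1 tb, ∀ x y : ℝ, 0 ≤ 1 / 128 - (x - C1 t) ^ 2 - (y - C2 t) ^ 2 →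
      x ∈ Ioo (-1:ℝ) 1 ∧ y ∈ Ioo (-1:ℝ) 1 ∧
      8 * (1 / 128 - (x - C1 t) ^ 2 - (y - C2 t) ^ 2) ≤ x - y)
    (hcont : ContinuousOn (fun p : ℝ × ℝ => u p.1 p.2) (Icc t1 tb ×ˢ Icc (-1) 1))
    (hder : ∀ t ∈ Icc t1 tb, ∀ x ∈ Ioo (-1:ℝ) 1, HasDerivAt (u t) (v t x) x)
    (hmono : ∀ t ∈ Icc t1 tb, ∀ x ∈ Ioo (-1:ℝ) 1, ∀ y ∈ Ioo (-1:ℝ) 1, y ≤ x → u t y ≤ u t x)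
    (heq : ∀ t ∈ Ioc t1 tb, ∀ x ∈ Ioo (-1:ℝ) 1, EqAt lam Lam θ u v t x)
    (hinit : ∀ x y : ℝ, 0 ≤ 1 / 128 - (x - C1 t1) ^ 2 - (y - C2 t1) ^ 2 →
      min 1 (x - y) / 4 ≤ u t1 x - u t1 y) :
    ∀ t ∈ Icc t1 tb, ∀ x y : ℝ, 0 ≤ 1 / 128 - (x - C1 t) ^ 2 - (y - C2 t) ^ 2 →
      c * (Real.exp (-(K * (t - t1))) * ((1 / 128 - (x - C1 t) ^ 2 - (y - C2 t) ^ 2)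
        + k * (1 / 128 - (x - C1 t) ^ 2 - (y - C2 t) ^ 2) ^ 2)) ≤ u t x - u t y := by
  obtain ⟨w, hw⟩ : ∃ w : ℝ → ℝ → ℝ → ℝ,
      ∀ t x y, w t x y = 1 / 128 - (x - C1 t) ^ 2 - (y - C2 t) ^ 2 := ⟨_, fun _ _ _ => rfl⟩
  simp only [← hw] at hsub hinit ⊢
  have hC1c : Continuous C1 := continuous_iff_continuousAt.2 fun t => (hC1 t).continuousAt
  have hC2c : Continuous C2 := continuous_iff_continuousAt.2 fun t => (hC2 t).continuousAt
  have hwc : Continuous (fun p : ℝ × ℝ × ℝ => w p.1 p.2.1 p.2.2) := by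
    simp only [hw]; fun_prop
  intro t₀ ht₀ x₀ y₀ hw₀
  by_contra! hneg
  set S : Set (ℝ × ℝ × ℝ) := (Icc t1 tb ×ˢ (Icc (-1) 1 ×ˢ Icc (-1) 1)) ∩
    {p | 0 ≤ w p.1 p.2.1 p.2.2} with hS
  have hScomp : IsCompact S :=
    (isCompact_Icc.prod (isCompact_Icc.prod isCompact_Icc)).inter_right
      (isClosed_le continuous_const hwc)
  have hSmem : ∀ t ∈ Icc t1 tb, ∀ x y, 0 ≤ w t x y → (t, x, y) ∈ S := fun t ht x y h =>
    ⟨⟨ht, Ioo_subset_Icc_self (hsub t ht x y h).1, Ioo_subset_Icc_self (hsub t ht x y h).2.1⟩, h⟩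
  obtain ⟨Φ, hΦ⟩ : ∃ Φ : ℝ → ℝ → ℝ → ℝ, ∀ t x y, Φ t x y =
      c * (Real.exp (-(K * (t - t1))) * (w t x y + k * (w t x y) ^ 2)) - (u t x - u t y) :=
    ⟨_, fun _ _ _ => rfl⟩
  have hΦc : ContinuousOn (fun p : ℝ × ℝ × ℝ => Φ p.1 p.2.1 p.2.2) S := by
    simp only [hΦ]
    refine ContinuousOn.sub (by fun_prop) (ContinuousOn.sub ?_ ?_)
    · exact hcont.comp (f := fun p : ℝ × ℝ × ℝ => (p.1, p.2.1)) (by fun_prop)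
        (fun p hp => ⟨hp.1.1, hp.1.2.1⟩)
    · exact hcont.comp (f := fun p : ℝ × ℝ × ℝ => (p.1, p.2.2)) (by fun_prop)
        (fun p hp => ⟨hp.1.1, hp.1.2.2⟩)
  obtain ⟨⟨t, x, y⟩, hp, hmax⟩ := hScomp.exists_isMaxOn ⟨_, hSmem t₀ ht₀ x₀ y₀ hw₀⟩ hΦc
  have hmax' : ∀ s ∈ Icc t1 tb, ∀ x' y', 0 ≤ w s x' y' → Φ s x' y' ≤ Φ t x y :=
    fun s hs x' y' h => hmax (hSmem s hs x' y' h)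
  have ht : t ∈ Icc t1 tb := hp.1.1
  have hw0 : 0 ≤ w t x y := hp.2
  obtain ⟨hx, hy, hxy⟩ := hsub t ht x y hw0
  have hpos : 0 < Φ t x y := by
    refine lt_of_lt_of_le ?_ (hmax' t₀ ht₀ x₀ y₀ hw₀)
    rw [hΦ]; linarith
  have hwle : w t x y ≤ 1 / 128 := by
    rw [hw]; linarith [sq_nonneg (x - C1 t), sq_nonneg (y - C2 t)]
  have hyx : y ≤ x := by linarith
  -- the maximum is not attained at the initial time
  have ht1 : t1 < t := by
    rcases ht.1.lt_or_eq with h | h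
    · exact h
    · exfalso
      subst h
      have h1 := hinit x y hw0
      rw [hΦ] at hpos
      simp only [sub_self, mul_zero, neg_zero, Real.exp_zero, one_mul] at hpos
      have h2 : w t1 x y ≤ min 1 (x - y) := le_min (by linarith) (by linarith)
      have h3 : c * (w t1 x y + k * w t1 x y ^ 2) ≤ (c * (1 + k)) * w t1 x y := by
        have h5 : w t1 x y ^ 2 ≤ w t1 x y := by
          rw [sq]; exact mul_le_of_le_one_left hw0 (by linarith)
        have : w t1 x y + k * w t1 x y ^ 2 ≤ (1 + k) * w t1 x y := by
          have := mul_le_mul_of_nonneg_left h5 hk.le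
          linarith
        have := mul_le_mul_of_nonneg_left this hc.le
        linarith
      have h4 : (c * (1 + k)) * w t1 x y ≤ 1 / 4 * w t1 x y := by gcongr
      linarith
  -- nor on the lateral boundary of the tube
  have hwpos : 0 < w t x y := by
    rcases hw0.lt_or_eq with h | h
    · exact h
    · exfalso
      have h1 := hmono t ht x hx y hy hyx
      rw [hΦ, ← h] at hpos
      simp only [ne_eq, OfNat.ofNat_ne_zero, not_false_eq_true, zero_pow, mul_zero, add_zero] at hpos
      linarith
  obtain ⟨A, kx, wx, hA, hA', hkx, hwx, hEx⟩ := heq t ⟨ht1, ht.2⟩ x hx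
  obtain ⟨B, ky, wy, hB, hB', hky, hwy, hEy⟩ := heq t ⟨ht1, ht.2⟩ y hy
  -- one-sided derivative tests for the excess `Φ` of the barrier over `Z` at its maximum
  obtain ⟨E, hE⟩ : ∃ E, E = Real.exp (-(K * (t - t1))) := ⟨_, rfl⟩
  -- time direction
  have hwt : HasDerivAt (fun s => w s x y) (2 * (x - C1 t) * V1 + 2 * (y - C2 t) * V2) t := by
    simp only [hw]
    have := ((((hC1 t).const_sub x).pow 2).const_sub (1 / 128)).sub (((hC2 t).const_sub y).pow 2)
    refine this.congr_deriv ?_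
    simp
  have hEt : HasDerivAt (fun s => Real.exp (-(K * (s - t1)))) (-K * E) t := by
    have := ((((hasDerivAt_id t).sub_const t1).const_mul K).neg).exp
    refine this.congr_deriv ?_
    rw [hE]; simp; ring
  have htime : 0 ≤ c * (-K * E * (w t x y + k * (w t x y) ^ 2)
      + E * ((1 + 2 * k * w t x y) * (2 * (x - C1 t) * V1 + 2 * (y - C2 t) * V2)))
      - (wx - wy) := by
    have hd : HasDerivAt (fun s => Φ s x y) (c * (-K * E * (w t x y + k * (w t x y) ^ 2)
      + E * ((1 + 2 * k * w t x y) * (2 * (x - C1 t) * V1 + 2 * (y - C2 t) * V2)))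
      - (wx - wy)) t := by
      simp only [hΦ]
      have := ((hEt.mul (hwt.add ((hwt.pow 2).const_mul k))).const_mul c).sub (hwx.sub hwy)
      refine this.congr_deriv ?_
      simp [hE]; left; ring
    have hev : ∀ᶠ s in 𝓝[<] t, s ∈ Ioo t1 t ∧ 0 < w s x y :=
      Filter.Eventually.and (Ioo_mem_nhdsLT ht1)
        ((hwt.continuousAt.eventually (lt_mem_nhds hwpos)).filter_mono nhdsWithin_le_nhds)
    obtain ⟨l, hl, hlI⟩ := mem_nhdsLT_iff_exists_Ioo_subset.1 hev
    have hl' : l < t := hl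
    refine deriv_nonneg_of_left_max (t' := (l + t) / 2) hd.hasDerivWithinAt (by linarith) ?_
    intro s hs
    rcases hs.2.lt_or_eq with h | h
    · obtain ⟨h1, h2⟩ := hlI (show s ∈ Ioo l t from ⟨by linarith [hs.1], h⟩)
      exact hmax' s ⟨h1.1.le, h1.2.le.trans ht.2⟩ x y h2.le
    · rw [h]
  -- spatial directions
  have hdw1 : ∀ x', HasDerivAt (fun z => w t z y) (-(2 * (x' - C1 t))) x' := fun x' => by
    simp only [hw]
    have := ((((hasDerivAt_id x').sub_const (C1 t)).pow 2).const_sub (1 / 128)).sub_const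
      ((y - C2 t) ^ 2)
    refine this.congr_deriv ?_
    simp
  have hdw2 : ∀ y', HasDerivAt (fun z => w t x z) (-(2 * (y' - C2 t))) y' := fun y' => by
    simp only [hw]
    have := (((hasDerivAt_id y').sub_const (C2 t)).pow 2).const_sub (1 / 128 - (x - C1 t) ^ 2)
    refine this.congr_deriv ?_
    simp
  have hspx : c * (E * (-(2 * (1 + 2 * k * w t x y)) + 8 * k * (x - C1 t) ^ 2)) - kx ≤ 0 := by
    refine second_deriv_nonpos (f := fun z => Φ t z y) (x := x)
      (g := fun z => c * (E * ((1 + 2 * k * w t z y) * (-(2 * (z - C1 t))))) - v t z) ?_ ?_ ?_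
    · filter_upwards [Ioo_mem_nhds hx.1 hx.2] with z hz
      simp only [hΦ, ← hE]
      have := ((((hdw1 z).add (((hdw1 z).pow 2).const_mul k)).const_mul E).const_mul c).sub
        ((hder t ht z hz).sub_const (u t y))
      refine this.congr_deriv ?_
      simp; ring
    · filter_upwards [(hdw1 x).continuousAt.eventually (lt_mem_nhds hwpos)] with z hz
      exact hmax' t ht z y hz.le
    · have h1 : HasDerivAt (fun z => c * (E * ((1 + 2 * k * w t z y) * (-(2 * (z - C1 t))))))
          (c * (E * (-(2 * (1 + 2 * k * w t x y)) + 8 * k * (x - C1 t) ^ 2))) x := by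
        have := (((((hdw1 x).const_mul (2 * k)).const_add 1).mul
          (((((hasDerivAt_id x).sub_const (C1 t)).const_mul 2)).neg)).const_mul E).const_mul c
        refine this.congr_deriv ?_
        simp; left; left; ring
      exact hkx.imp (fun h => h1.hasDerivWithinAt.sub h) (fun h => h1.hasDerivWithinAt.sub h)
  have hspy : c * (E * (-(2 * (1 + 2 * k * w t x y)) + 8 * k * (y - C2 t) ^ 2)) + ky ≤ 0 := by
    refine second_deriv_nonpos (f := fun z => Φ t x z) (x := y)
      (g := fun z => c * (E * ((1 + 2 * k * w t x z) * (-(2 * (z - C2 t))))) + v t z) ?_ ?_ ?_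
    · filter_upwards [Ioo_mem_nhds hy.1 hy.2] with z hz
      simp only [hΦ, ← hE]
      have := ((((hdw2 z).add (((hdw2 z).pow 2).const_mul k)).const_mul E).const_mul c).sub
        ((hder t ht z hz).const_sub (u t x))
      refine this.congr_deriv ?_
      simp; ring
    · filter_upwards [(hdw2 y).continuousAt.eventually (lt_mem_nhds hwpos)] with z hz
      exact hmax' t ht x z hz.le
    · have h1 : HasDerivAt (fun z => c * (E * ((1 + 2 * k * w t x z) * (-(2 * (z - C2 t))))))
          (c * (E * (-(2 * (1 + 2 * k * w t x y)) + 8 * k * (y - C2 t) ^ 2))) y := by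
        have := (((((hdw2 y).const_mul (2 * k)).const_add 1).mul
          (((((hasDerivAt_id y).sub_const (C2 t)).const_mul 2)).neg)).const_mul E).const_mul c
        refine this.congr_deriv ?_
        simp; left; left; ring
      exact hky.imp (fun h => h1.hasDerivWithinAt.add h) (fun h => h1.hasDerivWithinAt.add h)
  have halg := barrier_algebra hlam hA hA' hB hB' hk hklam hK (hw t x y) hw0 hV1 hV2
  have hKpos : 0 ≤ K := by
    rw [hK]; have : 0 < Lam := by linarith
    positivity
  have hEge : Real.exp (-K) ≤ E := by
    rw [hE]; apply Real.exp_le_exp.2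
    have : K * (t - t1) ≤ K * 1 := by gcongr; linarith [ht.2]
    linarith
  have hEpos : 0 < c * E := by rw [hE]; positivity
  have hA0 : 0 < A := by linarith
  have hB0 : 0 < B := by linarith
  have f1 := mul_le_mul_of_nonneg_left hspx hA0.le
  have f2 := mul_le_mul_of_nonneg_left hspy hB0.le
  have f3 := mul_le_mul_of_nonneg_left halg hEpos.le
  have f4 := mul_le_mul_of_nonneg_left hEge hc.le
  obtain ⟨g1, g2⟩ := abs_le.1 hEx
  obtain ⟨g3, g4⟩ := abs_le.1 hEy
  generalize w t x y = W at *
  generalize x - C1 t = X at *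
  generalize y - C2 t = Y at *
  ring_nf at f1 f2 f3 f4 htime g1 g2 g3 g4 hθ
  linarith

/-! ### Lower bound for the slope -/

/-- A lower bound `θ` for the slope `v = u_x` at `(tb, xb)`, for every `u` nondecreasing in `x` that
solves the parabolic inequality with right-hand side `θ`. The ball of squared radius `1/128` centred
at `(xb + 1/16, xb - 1/16)` at time `tb`, moving with velocity `(V1, V2)`, touches the diagonal
exactly at `(xb, xb)`; the last hypothesis asks for `u(x) - u(y) ≥ min(1, x - y)/4` on the square
around its position at time `t1`. -/
def SlopeProp (lam Lam θ : ℝ) : Prop :=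
  ∀ (u v : ℝ → ℝ → ℝ) (t1 tb xb V1 V2 : ℝ),
      t1 ≤ tb → tb ≤ t1 + 1 → |xb| ≤ 1/4 → -2 ≤ V1 → V1 ≤ 0 → 0 ≤ V2 → V2 ≤ 2 →
      xb + 1/16 + (t1 - tb) * V1 ≤ 1/2 → -(1/2) ≤ xb - 1/16 + (t1 - tb) * V2 →
      ContinuousOn (fun p : ℝ × ℝ => u p.1 p.2) (Icc t1 tb ×ˢ Icc (-1) 1) →
      (∀ t ∈ Icc t1 tb, ∀ x ∈ Ioo (-1:ℝ) 1, HasDerivAt (u t) (v t x) x) →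
      (∀ t ∈ Icc t1 tb, ∀ x ∈ Ioo (-1:ℝ) 1, ∀ y ∈ Ioo (-1:ℝ) 1, y ≤ x → u t y ≤ u t x) →
      (∀ t ∈ Ioc t1 tb, ∀ x ∈ Ioo (-1:ℝ) 1, EqAt lam Lam θ u v t x) →
      (∀ x y : ℝ, y ≤ x → |x - (xb + 1/16 + (t1 - tb) * V1)| ≤ 1/8 →
        |y - (xb - 1/16 + (t1 - tb) * V2)| ≤ 1/8 → min 1 (x - y) / 4 ≤ u t1 x - u t1 y) →
      θ ≤ v tb xb

/-- `SlopeProp` holds with a `θ` depending on the ellipticity constants only, namely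
`θ = c e^{-K} / 16` with `c = 1/(4(1 + k))`. The barrier of `barrier_compare` vanishes at the
boundary point `(xb, xb)` of the ball and grows linearly along `(xb + d, xb - d)`, so
`u(xb + d) - u(xb - d) ≥ 2θd`, and `d → 0` gives the slope bound. -/
lemma slope_bound {lam Lam : ℝ} (hlam : 0 < lam) (hLam : lam ≤ Lam) :
    ∃ θ : ℝ, 0 < θ ∧ θ ≤ 1/4 ∧ SlopeProp lam Lam θ := by
  have hLam0 : 0 < Lam := by linarith
  obtain ⟨k, hk⟩ : ∃ k : ℝ, k = 16 * (4 * Lam + 2) / lam := ⟨_, rfl⟩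
  have hkpos : 0 < k := by rw [hk]; positivity
  have hklam : k * lam = 16 * (4 * Lam + 2) := by rw [hk]; field_simp
  obtain ⟨K, hK⟩ : ∃ K : ℝ, K = 8 * k * lam + 8 * k * Lam + 2 * k := ⟨_, rfl⟩
  have hKpos : 0 < K := by rw [hK]; positivity
  obtain ⟨c, hc⟩ : ∃ c : ℝ, c = 1 / (4 * (1 + k)) := ⟨_, rfl⟩
  have hcpos : 0 < c := by rw [hc]; positivity
  have hck : c * (1 + k) = 1 / 4 := by rw [hc]; field_simp
  have hexp1 : Real.exp (-K) ≤ 1 := by rw [Real.exp_le_one_iff]; linarith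
  have hexp0 := Real.exp_pos (-K)
  obtain ⟨θ, hθ⟩ : ∃ θ : ℝ, θ = c * Real.exp (-K) / 16 := ⟨_, rfl⟩
  have hθpos : 0 < θ := by rw [hθ]; positivity
  have hc1 : c ≤ 1 / 4 := by nlinarith
  have hcE : c * Real.exp (-K) ≤ c * 1 := by gcongr
  refine ⟨θ, hθpos, by linarith, ?_⟩
  intro u v t1 tb xb V1 V2 ht htb hxb hV1 hV1' hV2 hV2' hc1b hc2b hcont hder hmono heq hinit
  obtain ⟨hxb1, hxb2⟩ := abs_le.1 hxb
  obtain ⟨C1, hC1⟩ : ∃ C1 : ℝ → ℝ, ∀ t, C1 t = xb + 1/16 + (t - tb) * V1 := ⟨_, fun _ => rfl⟩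
  obtain ⟨C2, hC2⟩ : ∃ C2 : ℝ → ℝ, ∀ t, C2 t = xb - 1/16 + (t - tb) * V2 := ⟨_, fun _ => rfl⟩
  rw [← hC1] at hc1b
  rw [← hC2] at hc2b
  simp only [← hC1, ← hC2] at hinit
  have hC1r : ∀ t ∈ Icc t1 tb, xb + 1/16 ≤ C1 t ∧ C1 t ≤ 1/2 := fun t ht => by
    have h1 : 0 ≤ (t - tb) * V1 := mul_nonneg_of_nonpos_of_nonpos (by linarith [ht.2]) hV1'
    have h2 : 0 ≤ (t1 - t) * V1 := mul_nonneg_of_nonpos_of_nonpos (by linarith [ht.1]) hV1'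
    rw [hC1] at hc1b ⊢
    constructor <;> linarith
  have hC2r : ∀ t ∈ Icc t1 tb, -(1/2) ≤ C2 t ∧ C2 t ≤ xb - 1/16 := fun t ht => by
    have h1 : (t - tb) * V2 ≤ 0 := mul_nonpos_of_nonpos_of_nonneg (by linarith [ht.2]) hV2
    have h2 : (t1 - t) * V2 ≤ 0 := mul_nonpos_of_nonpos_of_nonneg (by linarith [ht.1]) hV2
    rw [hC2] at hc2b ⊢
    constructor <;> linarith
  have hball : ∀ t x y, 0 ≤ 1 / 128 - (x - C1 t) ^ 2 - (y - C2 t) ^ 2 →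
      |x - C1 t| ≤ 1/8 ∧ |y - C2 t| ≤ 1/8 := by
    intro t x y h
    have h1 := sq_nonneg (x - C1 t)
    have h2 := sq_nonneg (y - C2 t)
    constructor
    · exact abs_le_of_sq_le_sq (by norm_num; linarith) (by norm_num)
    · exact abs_le_of_sq_le_sq (by norm_num; linarith) (by norm_num)
  have hsub : ∀ t ∈ Icc t1 tb, ∀ x y : ℝ, 0 ≤ 1 / 128 - (x - C1 t) ^ 2 - (y - C2 t) ^ 2 →
      x ∈ Ioo (-1:ℝ) 1 ∧ y ∈ Ioo (-1:ℝ) 1 ∧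
      8 * (1 / 128 - (x - C1 t) ^ 2 - (y - C2 t) ^ 2) ≤ x - y := by
    intro t ht x y h
    obtain ⟨h1, h2⟩ := hball t x y h
    obtain ⟨h3, h4⟩ := hC1r t ht
    obtain ⟨h5, h6⟩ := hC2r t ht
    obtain ⟨h7, h8⟩ := abs_le.1 h1
    obtain ⟨h9, h10⟩ := abs_le.1 h2
    refine ⟨⟨by linarith, by linarith⟩, ⟨by linarith, by linarith⟩, ?_⟩
    have q1 := sq_nonneg (x - C1 t + 1/16)
    have q2 := sq_nonneg (y - C2 t - 1/16)
    ring_nf at q1 q2 ⊢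
    linarith
  -- the ball moves towards the diagonal, which it meets only at time `tb`
  have key := barrier_compare hlam hLam hkpos hklam hK hcpos hck.le (by linarith) htb
    (abs_le.2 ⟨hV1, by linarith⟩) (abs_le.2 ⟨by linarith, hV2'⟩)
    (fun t => by
      have := ((((hasDerivAt_id t).sub_const tb).mul_const V1).const_add (xb + 1/16))
      rw [funext hC1]; simpa using this)
    (fun t => by
      have := ((((hasDerivAt_id t).sub_const tb).mul_const V2).const_add (xb - 1/16))
      rw [funext hC2]; simpa using this)
    hsub hcont hder hmono heq
    (fun x y h => by
      obtain ⟨h1, h2⟩ := hball t1 x y h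
      obtain ⟨_, _, h3⟩ := hsub t1 ⟨le_rfl, ht⟩ x y h
      exact hinit x y (by linarith) h1 h2)
  have hdiag : ∀ d ∈ Icc (0:ℝ) (1/16), 2 * θ * d ≤ u tb (xb + d) - u tb (xb - d) := by
    intro d hd
    have e1 : C1 tb = xb + 1/16 := by rw [hC1]; ring
    have e2 : C2 tb = xb - 1/16 := by rw [hC2]; ring
    have hd2 : d * d ≤ d * (1/16) := mul_le_mul_of_nonneg_left hd.2 hd.1
    have hw : d / 8 ≤ 1 / 128 - (xb + d - C1 tb) ^ 2 - (xb - d - C2 tb) ^ 2 := by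
      rw [e1, e2]; ring_nf; ring_nf at hd2; linarith
    have hd0 := hd.1
    have h1 := key tb ⟨ht, le_rfl⟩ (xb + d) (xb - d) (by linarith)
    refine le_trans ?_ h1
    have h2 : 2 * θ * d = c * (Real.exp (-K) * (d / 8 + k * 0)) := by rw [hθ]; ring
    rw [h2]
    have : K * (tb - t1) ≤ K * 1 := by gcongr; linarith
    have : 0 ≤ (1 / 128 - (xb + d - C1 tb) ^ 2 - (xb - d - C2 tb) ^ 2) ^ 2 := sq_nonneg _
    gcongr
    linarith
  have hx := hder tb ⟨ht, le_rfl⟩ xb ⟨by linarith, by linarith⟩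
  have hD : HasDerivAt (fun d => 2 * θ * d - (u tb (xb + d) - u tb (xb - d)))
      (2 * θ - (v tb xb + v tb xb)) 0 := by
    have hx1 : HasDerivAt (u tb) (v tb xb) (xb + 0) := by simpa using hx
    have hx2 : HasDerivAt (u tb) (v tb xb) (xb - 0) := by simpa using hx
    have a1 := hx1.comp (0:ℝ) ((hasDerivAt_id (0:ℝ)).const_add xb)
    have a2 := hx2.comp (0:ℝ) ((hasDerivAt_id (0:ℝ)).const_sub xb)
    have := ((hasDerivAt_id (0:ℝ)).const_mul (2 * θ)).sub (a1.sub a2)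
    refine this.congr_deriv ?_
    ring
  have := deriv_nonpos_of_right_max (t' := 1/16) hD.hasDerivWithinAt (by norm_num) (fun d hd => by
    have := hdiag d hd
    simp only [mul_zero, add_zero, sub_zero, sub_self]; linarith)
  linarith

/-! ### Oscillation decay of the spatial derivative -/

lemma mvt_lower {f g : ℝ → ℝ} {p q lo : ℝ} (hd : ∀ x ∈ Ioo p q, HasDerivAt f (g x) x)
    (hlo : ∀ x ∈ Ioo p q, lo ≤ g x) {x y : ℝ} (hx : x ∈ Ioo p q) (hy : y ∈ Ioo p q)
    (hxy : x ≤ y) : lo * (y - x) ≤ f y - f x := by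
  refine (convex_Ioo p q).mul_sub_le_image_sub_of_le_deriv
    (fun z hz => (hd z hz).continuousAt.continuousWithinAt) ?_ ?_ x hx y hy hxy
  · rw [interior_Ioo]; exact fun z hz => (hd z hz).differentiableAt.differentiableWithinAt
  · rw [interior_Ioo]; intro z hz; rw [(hd z hz).deriv]; exact hlo z hz

lemma mvt_upper {f g : ℝ → ℝ} {p q hi : ℝ} (hd : ∀ x ∈ Ioo p q, HasDerivAt f (g x) x)
    (hhi : ∀ x ∈ Ioo p q, g x ≤ hi) {x y : ℝ} (hx : x ∈ Ioo p q) (hy : y ∈ Ioo p q)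
    (hxy : x ≤ y) : f y - f x ≤ hi * (y - x) := by
  have := mvt_lower (f := fun z => - f z) (g := fun z => - g z) (lo := -hi)
    (fun z hz => (hd z hz).neg) (fun z hz => neg_le_neg (hhi z hz)) hx hy hxy
  linarith

/-- If `0 ≤ u_x ≤ 1` on `[t1, 0] × (-1, 1)`, then `u_x ≥ θ` on the smaller cylinder provided that
either `t1 = -1` and `u` rises by at least half of the maximal amount over `[-1/2, 1/2]` at that
time, or `u_x ≥ 1/4` at the initial time. In the first case the ball travels from the centre
`(1/2, -1/2)` to the diagonal; in the second it is at rest. -/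
lemma slope_from_start {lam Lam θ : ℝ} (hS : SlopeProp lam Lam θ) {u v : ℝ → ℝ → ℝ} {t1 : ℝ}
    (ht1 : t1 ≤ 0) (ht1' : -1 ≤ t1)
    (hcont : ContinuousOn (fun p : ℝ × ℝ => u p.1 p.2) (Icc t1 0 ×ˢ Icc (-1) 1))
    (hder : ∀ t ∈ Icc t1 0, ∀ x ∈ Ioo (-1:ℝ) 1, HasDerivAt (u t) (v t x) x)
    (hv : ∀ t ∈ Icc t1 0, ∀ x ∈ Ioo (-1:ℝ) 1, 0 ≤ v t x ∧ v t x ≤ 1)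
    (heq : ∀ t ∈ Ioc t1 0, ∀ x ∈ Ioo (-1:ℝ) 1, EqAt lam Lam θ u v t x)
    (hstart : (t1 = -1 ∧ 1 / 2 ≤ u (-1) (1/2) - u (-1) (-(1/2))) ∨
      ∀ x ∈ Ioo (-1:ℝ) 1, 1 / 4 ≤ v t1 x) :
    ∀ t ∈ Icc t1 0, -(1/16) ≤ t → ∀ x : ℝ, |x| ≤ 1/4 → θ ≤ v t x := by
  intro tb htb htb' xb hxb
  obtain ⟨hx1, hx2⟩ := abs_le.1 hxb
  have hmono : ∀ t ∈ Icc t1 0, ∀ x ∈ Ioo (-1:ℝ) 1, ∀ y ∈ Ioo (-1:ℝ) 1, y ≤ x → u t y ≤ u t x := by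
    intro t ht x hx y hy hxy
    have := mvt_lower (hder t ht) (fun z hz => (hv t ht z hz).1) hy hx hxy
    linarith
  have hIcc : Icc t1 tb ⊆ Icc t1 0 := Icc_subset_Icc_right htb.2
  have hIoc : Ioc t1 tb ⊆ Ioc t1 0 := Ioc_subset_Ioc_right htb.2
  have ht1m : t1 ∈ Icc t1 0 := ⟨le_rfl, ht1⟩
  rcases hstart with ⟨h1, h2⟩ | h
  · subst h1
    have hd : 0 < tb + 1 := by linarith
    have c1 : xb + 1/16 + (-1 - tb) * ((xb + 1/16 - 1/2) / (tb + 1)) = 1/2 := by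
      field_simp; ring
    have c2 : xb - 1/16 + (-1 - tb) * ((xb - 1/16 + 1/2) / (tb + 1)) = -(1/2) := by
      field_simp; ring
    refine hS u v (-1) tb xb ((xb + 1/16 - 1/2) / (tb + 1)) ((xb - 1/16 + 1/2) / (tb + 1))
      htb.1 (by linarith [htb.2]) hxb ?_ ?_ ?_ ?_ c1.le c2.ge
      (hcont.mono (prod_mono hIcc Subset.rfl)) (fun t ht => hder t (hIcc ht))
      (fun t ht => hmono t (hIcc ht)) (fun t ht => heq t (hIoc ht)) ?_
    · rw [le_div_iff₀ hd]; linarith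
    · exact div_nonpos_of_nonpos_of_nonneg (by linarith) hd.le
    · exact div_nonneg (by linarith) hd.le
    · rw [div_le_iff₀ hd]; linarith
    · intro x y hxy hx hy
      rw [c1] at hx
      rw [c2] at hy
      obtain ⟨a1, a2⟩ := abs_le.1 hx
      obtain ⟨a3, a4⟩ := abs_le.1 hy
      have b1 : u (-1) (1/2) - u (-1) x ≤ 1/8 := by
        rcases le_total x (1/2) with h | h
        · have := mvt_upper (hder _ ht1m) (fun z hz => (hv _ ht1m z hz).2)
            (x := x) (y := 1/2) ⟨by linarith, by linarith⟩ ⟨by norm_num, by norm_num⟩ h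
          linarith
        · have := hmono _ ht1m x ⟨by linarith, by linarith⟩ (1/2) ⟨by norm_num, by norm_num⟩ h
          linarith
      have b2 : u (-1) y - u (-1) (-(1/2)) ≤ 1/8 := by
        rcases le_total y (-(1/2)) with h | h
        · have := hmono _ ht1m (-(1/2)) ⟨by norm_num, by norm_num⟩ y ⟨by linarith, by linarith⟩ h
          linarith
        · have := mvt_upper (hder _ ht1m) (fun z hz => (hv _ ht1m z hz).2)
            (x := -(1/2)) (y := y) ⟨by norm_num, by norm_num⟩ ⟨by linarith, by linarith⟩ h
          linarith
      have := min_le_left 1 (x - y)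
      linarith
  · refine hS u v t1 tb xb 0 0 htb.1 (by linarith [htb.2]) hxb (by norm_num) le_rfl le_rfl
      (by norm_num) (by linarith) (by linarith)
      (hcont.mono (prod_mono hIcc Subset.rfl)) (fun t ht => hder t (hIcc ht))
      (fun t ht => hmono t (hIcc ht)) (fun t ht => heq t (hIoc ht)) ?_
    intro x y hxy hx hy
    obtain ⟨a1, a2⟩ := abs_le.1 hx
    obtain ⟨a3, a4⟩ := abs_le.1 hy
    have := mvt_lower (hder _ ht1m) h (x := y) (y := x) ⟨by linarith, by linarith⟩
      ⟨by linarith, by linarith⟩ hxy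
    have := min_le_right 1 (x - y)
    linarith

/-- Parabolic scaling by `r` about `(t0, x0)`, multiplication by `p` and addition of the affine
function `q x` preserve the parabolic inequality and its ellipticity constants. -/
lemma EqAt.rescale {lam Lam F F' p q r t0 x0 t x : ℝ} {u v : ℝ → ℝ → ℝ} (hr : 0 < r)
    (hF : |p| * r ^ 2 * F ≤ F')
    (h : EqAt lam Lam F u v (t0 + r ^ 2 * t) (x0 + r * x)) :
    EqAt lam Lam F' (fun t x => p * u (t0 + r ^ 2 * t) (x0 + r * x) + q * x)
      (fun t x => p * r * v (t0 + r ^ 2 * t) (x0 + r * x) + q) t x := by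
  obtain ⟨A, k, w, hA, hA', hk, hw, hE⟩ := h
  refine ⟨A, p * r ^ 2 * k, p * r ^ 2 * w, hA, hA', ?_, ?_, ?_⟩
  · have h0 : HasDerivAt (fun z => x0 + r * z) r x := by
      simpa using ((hasDerivAt_id x).const_mul r).const_add x0
    refine hk.imp (fun hk => ?_) (fun hk => ?_)
    · have h1 := hk.comp x (h0.hasDerivWithinAt (s := Ici x))
        (fun z (hz : x ≤ z) => show x0 + r * x ≤ x0 + r * z by gcongr)
      have := (h1.const_mul (p * r)).add_const q
      refine this.congr_deriv ?_
      ring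
    · have h1 := hk.comp x (h0.hasDerivWithinAt (s := Iic x))
        (fun z (hz : z ≤ x) => show x0 + r * z ≤ x0 + r * x by gcongr)
      have := (h1.const_mul (p * r)).add_const q
      refine this.congr_deriv ?_
      ring
  · have h0 : HasDerivAt (fun z => t0 + r ^ 2 * z) (r ^ 2) t := by
      simpa using ((hasDerivAt_id t).const_mul (r ^ 2)).const_add t0
    have h1 := hw.comp t h0
    have := (h1.const_mul p).add_const (q * x)
    refine this.congr_deriv ?_
    ring
  · have : p * r ^ 2 * w - A * (p * r ^ 2 * k) = p * r ^ 2 * (w - A * k) := by ring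
    rw [this, abs_mul, abs_mul, abs_of_nonneg (sq_nonneg r)]
    refine le_trans ?_ hF
    gcongr

/-- `u` solves the parabolic inequality with right-hand side `F` in `(0, τ) × (-3L, 3L)`, is
continuous and has spatial derivative `v` up to time `0`, where `v` is `α`-Hölder with
constant `C0`. -/
structure ExtSol (lam Lam F C0 α L τ : ℝ) (u v : ℝ → ℝ → ℝ) : Prop where
  cont : ContinuousOn (fun p : ℝ × ℝ => u p.1 p.2) (Ico 0 τ ×ˢ Ioo (-(3 * L)) (3 * L))
  der : ∀ t ∈ Ico 0 τ, ∀ x ∈ Ioo (-(3 * L)) (3 * L), HasDerivAt (u t) (v t x) x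
  eqn : ∀ t ∈ Ioo 0 τ, ∀ x ∈ Ioo (-(3 * L)) (3 * L), EqAt lam Lam F u v t x
  init : ∀ x ∈ Ioo (-(3 * L)) (3 * L), ∀ y ∈ Ioo (-(3 * L)) (3 * L),
    |v 0 x - v 0 y| ≤ C0 * |x - y| ^ α

/-- Oscillation decay: from a backward cylinder of radius `r`, cut off at time `0`, to the one of
radius `r/4` the oscillation bound `ω` of `v = u_x` improves by the factor `1 - θ`. After
normalization to `0 ≤ u_x ≤ 1`, either `u` or `x - u` rises by at least `1/2` over `[-1/2, 1/2]`, and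
`slope_from_start` bounds its slope below. If the cylinder reaches time `0`, the Hölder bound on the
initial gradient provides the starting condition instead. -/
lemma osc_step {lam Lam θ F C0 α L τ : ℝ} {u v : ℝ → ℝ → ℝ} (hS : SlopeProp lam Lam θ)
    (hθ' : θ ≤ 1 / 4) (hC0 : 0 ≤ C0) (hα : 0 < α)
    (h : ExtSol lam Lam F C0 α L τ u v) {t0 x0 r m ω : ℝ} (ht0 : t0 ∈ Ioo 0 τ)
    (hx0 : x0 ∈ Icc (-L) L) (hr : 0 < r) (hrL : r ≤ L) (hω : 0 < ω)
    (hF : F * r ≤ θ * ω) (hC : C0 * (2 * r) ^ α ≤ ω / 4)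
    (hosc : ∀ t ∈ Icc 0 t0, t0 - r ^ 2 ≤ t → ∀ x, |x - x0| ≤ r → m ≤ v t x ∧ v t x ≤ m + ω) :
    ∃ m', ∀ t ∈ Icc 0 t0, t0 - (r / 4) ^ 2 ≤ t → ∀ x, |x - x0| ≤ r / 4 →
      m' ≤ v t x ∧ v t x ≤ m' + (1 - θ) * ω := by
  obtain ⟨t1, ht1⟩ : ∃ t1 : ℝ, t1 = max (-1) (-(t0 / r ^ 2)) := ⟨_, rfl⟩
  have hr2 : 0 < r ^ 2 := by positivity
  have hr2' : r ^ 2 ≠ 0 := hr2.ne'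
  have ht1a : -1 ≤ t1 := ht1 ▸ le_max_left _ _
  have ht1b : t1 ≤ 0 := by
    rw [ht1]; exact max_le (by norm_num) (neg_nonpos.2 (div_nonneg ht0.1.le hr2.le))
  have hpos : ∀ t, t1 ≤ t → 0 ≤ t0 + r ^ 2 * t := fun t ht => by
    have : -(t0 / r ^ 2) ≤ t := (le_max_right _ _).trans (ht1 ▸ ht)
    have := mul_le_mul_of_nonneg_left this hr2.le
    have e : r ^ 2 * -(t0 / r ^ 2) = -t0 := by field_simp
    linarith
  have hposs : ∀ t, t1 < t → 0 < t0 + r ^ 2 * t := fun t ht => by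
    have : -(t0 / r ^ 2) < t := lt_of_le_of_lt (le_max_right _ _) (ht1 ▸ ht)
    have := mul_lt_mul_of_pos_left this hr2
    have e : r ^ 2 * -(t0 / r ^ 2) = -t0 := by field_simp
    linarith
  have hneg : ∀ t ≤ 0, r ^ 2 * t ≤ 0 := fun t ht => mul_nonpos_of_nonneg_of_nonpos hr2.le ht
  have hge : ∀ t, t1 ≤ t → t0 - r ^ 2 ≤ t0 + r ^ 2 * t := fun t ht => by
    have := mul_le_mul_of_nonneg_left (ht1a.trans ht) hr2.le
    linarith
  have hxr : ∀ x ∈ Icc (-1:ℝ) 1, |x0 + r * x - x0| ≤ r := fun x hx => by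
    rw [add_sub_cancel_left, abs_mul, abs_of_pos hr]
    exact mul_le_of_le_one_right hr.le (abs_le.2 hx)
  have hxI : ∀ x ∈ Icc (-1:ℝ) 1, x0 + r * x ∈ Ioo (-(3 * L)) (3 * L) := fun x hx => by
    obtain ⟨a1, a2⟩ := abs_le.1 (hxr x hx)
    constructor <;> linarith [hx0.1, hx0.2]
  have hv01 : ∀ t ∈ Icc t1 0, ∀ x ∈ Icc (-1:ℝ) 1,
      m ≤ v (t0 + r ^ 2 * t) (x0 + r * x) ∧ v (t0 + r ^ 2 * t) (x0 + r * x) ≤ m + ω :=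
    fun t ht x hx => hosc _ ⟨hpos t ht.1, by linarith [hneg t ht.2]⟩ (hge t ht.1) _ (hxr x hx)
  -- the two affine normalizations of `u` are treated at once
  have main : ∀ p q : ℝ, |p| * (ω * r) = 1 →
      (∀ t ∈ Icc t1 0, ∀ x ∈ Icc (-1:ℝ) 1, 0 ≤ p * r * v (t0 + r ^ 2 * t) (x0 + r * x) + q ∧
        p * r * v (t0 + r ^ 2 * t) (x0 + r * x) + q ≤ 1) →
      ((t1 = -1 ∧ 1 / 2 ≤ (p * u (t0 + r ^ 2 * (-1)) (x0 + r * (1/2)) + q * (1/2)) -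
        (p * u (t0 + r ^ 2 * (-1)) (x0 + r * (-(1/2))) + q * (-(1/2)))) ∨
        ∀ x ∈ Ioo (-1:ℝ) 1, 1 / 4 ≤ p * r * v (t0 + r ^ 2 * t1) (x0 + r * x) + q) →
      ∀ t ∈ Icc 0 t0, t0 - (r / 4) ^ 2 ≤ t → ∀ x, |x - x0| ≤ r / 4 →
        θ ≤ p * r * v t x + q := by
    intro p q hp hb hst t ht htr x hx
    have hder : ∀ t ∈ Icc t1 0, ∀ x ∈ Ioo (-1:ℝ) 1,
        HasDerivAt (fun x => p * u (t0 + r ^ 2 * t) (x0 + r * x) + q * x)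
          (p * r * v (t0 + r ^ 2 * t) (x0 + r * x) + q) x := by
      intro t ht x hx
      have h0 : HasDerivAt (fun z => x0 + r * z) r x := by
        simpa using ((hasDerivAt_id x).const_mul r).const_add x0
      have h1 := (h.der (t0 + r ^ 2 * t) ⟨hpos t ht.1, by linarith [hneg t ht.2, ht0.2]⟩ _
        (hxI x (Ioo_subset_Icc_self hx))).comp x h0
      refine ((h1.const_mul p).add ((hasDerivAt_id x).const_mul q)).congr_deriv ?_
      ring
    have hcont : ContinuousOn (fun z : ℝ × ℝ =>
        p * u (t0 + r ^ 2 * z.1) (x0 + r * z.2) + q * z.2) (Icc t1 0 ×ˢ Icc (-1) 1) := by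
      refine ContinuousOn.add (ContinuousOn.mul continuousOn_const ?_) (by fun_prop)
      exact h.cont.comp (f := fun z : ℝ × ℝ => (t0 + r ^ 2 * z.1, x0 + r * z.2)) (by fun_prop)
        (fun z hz => ⟨⟨hpos _ hz.1.1, by linarith [hneg _ hz.1.2, ht0.2]⟩, hxI _ hz.2⟩)
    have hpF : |p| * r ^ 2 * F ≤ θ := by
      have : |p| * r ^ 2 * F = |p| * r * (F * r) := by ring
      rw [this]
      have h2 : |p| * r * (F * r) ≤ |p| * r * (θ * ω) := by gcongr
      have h3 : |p| * r * (θ * ω) = θ * (|p| * (ω * r)) := by ring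
      rw [h3, hp] at h2
      linarith
    have := slope_from_start hS
      (u := fun t x => p * u (t0 + r ^ 2 * t) (x0 + r * x) + q * x)
      (v := fun t x => p * r * v (t0 + r ^ 2 * t) (x0 + r * x) + q) ht1b ht1a hcont hder
      (fun t ht x hx => hb t ht x (Ioo_subset_Icc_self hx))
      (fun t ht x hx => EqAt.rescale hr hpF (h.eqn _
        ⟨hposs t ht.1, by linarith [hneg t ht.2, ht0.2]⟩ _ (hxI x (Ioo_subset_Icc_self hx))))
      hst ((t - t0) / r ^ 2) ⟨?_, ?_⟩ ?_ ((x - x0) / r) ?_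
    · have e1 : t0 + r ^ 2 * ((t - t0) / r ^ 2) = t := by field_simp; ring
      have e2 : x0 + r * ((x - x0) / r) = x := by field_simp; ring
      simpa only [e1, e2] using this
    · rw [ht1]
      refine max_le ?_ ?_
      · rw [le_div_iff₀ hr2]; linarith
      · rw [← neg_div]; gcongr; linarith [ht.1]
    · exact div_nonpos_of_nonpos_of_nonneg (by linarith [ht.2]) hr2.le
    · rw [le_div_iff₀ hr2]; linarith
    · rw [abs_div, abs_of_pos hr, div_le_iff₀ hr]; linarith
  have hωr : 0 < ω * r := by positivity
  have hp1 : |1 / (ω * r)| * (ω * r) = 1 := by rw [abs_of_pos (by positivity)]; field_simp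
  have hp2 : |(-(1 / (ω * r)))| * (ω * r) = 1 := by rw [abs_neg]; exact hp1
  have e1 : ∀ V : ℝ, 1 / (ω * r) * r * V + -(m / ω) = (V - m) / ω := fun V => by field_simp; ring
  have e2 : ∀ V : ℝ, -(1 / (ω * r)) * r * V + (1 + m / ω) = 1 - (V - m) / ω := fun V => by
    field_simp; ring
  have m1 := main (1 / (ω * r)) (-(m / ω)) hp1 (fun t ht x hx => by
    obtain ⟨a1, a2⟩ := hv01 t ht x hx
    rw [e1]
    exact ⟨div_nonneg (by linarith) hω.le, by rw [div_le_one hω]; linarith⟩)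
  have m2 := main (-(1 / (ω * r))) (1 + m / ω) hp2 (fun t ht x hx => by
    obtain ⟨a1, a2⟩ := hv01 t ht x hx
    rw [e2]
    have b1 : 0 ≤ (v (t0 + r ^ 2 * t) (x0 + r * x) - m) / ω := div_nonneg (by linarith) hω.le
    have b2 : (v (t0 + r ^ 2 * t) (x0 + r * x) - m) / ω ≤ 1 := by rw [div_le_one hω]; linarith
    constructor <;> linarith)
  simp only [e1] at m1
  simp only [e2] at m2
  have hθpos : θ * ω ≤ ω := by nlinarith
  -- shrinking the cylinder keeps the old bounds
  have hold : ∀ t ∈ Icc 0 t0, t0 - (r / 4) ^ 2 ≤ t → ∀ x, |x - x0| ≤ r / 4 →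
      m ≤ v t x ∧ v t x ≤ m + ω := fun t ht htr x hx =>
    hosc t ht (by nlinarith) x (by linarith)
  have conc1 : (∀ t ∈ Icc 0 t0, t0 - (r / 4) ^ 2 ≤ t → ∀ x, |x - x0| ≤ r / 4 →
      θ ≤ (v t x - m) / ω) → ∃ m', ∀ t ∈ Icc 0 t0, t0 - (r / 4) ^ 2 ≤ t → ∀ x, |x - x0| ≤ r / 4 →
      m' ≤ v t x ∧ v t x ≤ m' + (1 - θ) * ω := fun H => ⟨m + θ * ω, fun t ht htr x hx => by
    have a := H t ht htr x hx
    rw [le_div_iff₀ hω] at a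
    have b := hold t ht htr x hx
    constructor <;> linarith⟩
  have conc2 : (∀ t ∈ Icc 0 t0, t0 - (r / 4) ^ 2 ≤ t → ∀ x, |x - x0| ≤ r / 4 →
      θ ≤ 1 - (v t x - m) / ω) → ∃ m', ∀ t ∈ Icc 0 t0, t0 - (r / 4) ^ 2 ≤ t →
      ∀ x, |x - x0| ≤ r / 4 →
      m' ≤ v t x ∧ v t x ≤ m' + (1 - θ) * ω := fun H => ⟨m, fun t ht htr x hx => by
    have a := H t ht htr x hx
    have a' : (v t x - m) / ω ≤ 1 - θ := by linarith
    rw [div_le_iff₀ hω] at a'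
    have b := hold t ht htr x hx
    constructor <;> linarith⟩
  -- the cylinder lies in positive times, or it is cut off by the initial time
  rcases le_or_gt (r ^ 2) t0 with hcase | hcase
  · have ht1e : t1 = -1 := by
      rw [ht1]; apply max_eq_left
      rw [neg_le_neg_iff, le_div_iff₀ hr2]; linarith
    set P := u (t0 + r ^ 2 * (-1)) (x0 + r * (1/2)) with hP
    set Q := u (t0 + r ^ 2 * (-1)) (x0 + r * (-(1/2))) with hQ
    have e3 : (-(1 / (ω * r)) * P + (1 + m / ω) * (1/2)) -
        (-(1 / (ω * r)) * Q + (1 + m / ω) * (-(1/2))) =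
        1 - ((1 / (ω * r) * P + -(m / ω) * (1/2)) - (1 / (ω * r) * Q + -(m / ω) * (-(1/2)))) := by
      ring
    rcases le_total (1/2) ((1 / (ω * r) * P + -(m / ω) * (1/2)) -
      (1 / (ω * r) * Q + -(m / ω) * (-(1/2)))) with hh | hh
    · exact conc1 (m1 (Or.inl ⟨ht1e, hh⟩))
    · exact conc2 (m2 (Or.inl ⟨ht1e, by rw [e3]; linarith⟩))
  · have ht1e : t1 = -(t0 / r ^ 2) := by
      rw [ht1]; apply max_eq_right
      rw [neg_le_neg_iff, div_le_one hr2]; linarith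
    have ht1z : t0 + r ^ 2 * t1 = 0 := by rw [ht1e]; field_simp; ring
    rw [ht1z] at m1 m2
    have hclose : ∀ x ∈ Ioo (-1:ℝ) 1, |(v 0 (x0 + r * x) - m) / ω - (v 0 x0 - m) / ω| ≤ 1 / 4 := by
      intro x hx
      have hx0' := hxI 0 ⟨by norm_num, by norm_num⟩
      rw [mul_zero, add_zero] at hx0'
      have a := h.init _ (hxI x (Ioo_subset_Icc_self hx)) x0 hx0'
      have b : |x0 + r * x - x0| ^ α ≤ (2 * r) ^ α := by
        apply Real.rpow_le_rpow (abs_nonneg _) _ hα.le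
        linarith [hxr x (Ioo_subset_Icc_self hx)]
      have c : |v 0 (x0 + r * x) - v 0 x0| ≤ ω / 4 :=
        a.trans ((mul_le_mul_of_nonneg_left b hC0).trans hC)
      rw [← sub_div, sub_sub_sub_cancel_right, abs_div, abs_of_pos hω, div_le_iff₀ hω]
      linarith
    rcases le_total (1/2) ((v 0 x0 - m) / ω) with hh | hh
    · refine conc1 (m1 (Or.inr fun x hx => ?_))
      have := (abs_le.1 (hclose x hx)).1
      linarith
    · refine conc2 (m2 (Or.inr fun x hx => ?_))
      have := (abs_le.1 (hclose x hx)).2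
      linarith

/-! ### Interior Hölder estimate -/

lemma SlopeProp.mono {lam Lam θ θ' : ℝ} (h : SlopeProp lam Lam θ) (hθ : θ' ≤ θ) :
    SlopeProp lam Lam θ' := by
  intro u v t1 tb xb V1 V2 h1 h2 h3 h4 h5 h6 h7 h8 h9 h10 h11 h12 h13 h14
  refine hθ.trans (h u v t1 tb xb V1 V2 h1 h2 h3 h4 h5 h6 h7 h8 h9 h10 h11 h12 ?_ h14)
  intro t ht x hx
  obtain ⟨A, k, w, a1, a2, a3, a4, a5⟩ := h13 t ht x hx
  exact ⟨A, k, w, a1, a2, a3, a4, a5.trans hθ⟩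

/-- `osc_step` along the radii `L / 4^n`. Both smallness conditions survive the iteration:
`(1/4)^n ≤ (1 - θ)^n` because `θ ≤ 1/4`, and `(1/4)^{nα} ≤ (1 - θ)^n` by assumption on `θ`. -/
lemma osc_iterate {lam Lam θ F C0 α L τ ω : ℝ} {u v : ℝ → ℝ → ℝ} (hS : SlopeProp lam Lam θ)
    (hθ : 0 < θ) (hθ' : θ ≤ 1 / 4) (hC0 : 0 ≤ C0) (hα : 0 < α)
    (hηα : (1 / 4 : ℝ) ^ α ≤ 1 - θ) (hL : 0 < L)
    (h : ExtSol lam Lam F C0 α L τ u v) (hω : 0 < ω) (hFω : F * L ≤ θ * ω)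
    (hCω : C0 * (2 * L) ^ α ≤ ω / 4)
    (hv : ∀ t ∈ Ico 0 τ, ∀ x ∈ Ioo (-(3 * L)) (3 * L), |v t x| ≤ ω / 2)
    {t0 x0 : ℝ} (ht0 : t0 ∈ Ioo 0 τ) (hx0 : x0 ∈ Icc (-L) L) (n : ℕ) :
    ∃ m, ∀ t ∈ Icc 0 t0, t0 - (L * (1 / 4) ^ n) ^ 2 ≤ t → ∀ x, |x - x0| ≤ L * (1 / 4) ^ n →
      m ≤ v t x ∧ v t x ≤ m + (1 - θ) ^ n * ω := by
  have hη : 0 < 1 - θ := by linarith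
  induction n with
  | zero =>
    refine ⟨-(ω / 2), fun t ht _ x hx => ?_⟩
    simp only [pow_zero, mul_one, one_mul] at hx ⊢
    obtain ⟨a1, a2⟩ := abs_le.1 hx
    obtain ⟨b1, b2⟩ := abs_le.1 (hv t ⟨ht.1, ht.2.trans_lt ht0.2⟩ x
      ⟨by linarith [hx0.1], by linarith [hx0.2]⟩)
    constructor <;> linarith
  | succ n ih =>
    obtain ⟨m, hm⟩ := ih
    have hq : (0:ℝ) < (1 / 4) ^ n := by positivity
    have hqη : (1 / 4 : ℝ) ^ n ≤ (1 - θ) ^ n := by gcongr; linarith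
    have hqα : ((1 / 4 : ℝ) ^ n) ^ α ≤ (1 - θ) ^ n := by
      rw [← Real.rpow_natCast, ← Real.rpow_mul (by norm_num), mul_comm, Real.rpow_mul (by norm_num),
        Real.rpow_natCast]
      gcongr
    obtain ⟨m', hm'⟩ := osc_step hS hθ' hC0 hα h (r := L * (1 / 4) ^ n) (m := m)
      (ω := (1 - θ) ^ n * ω) ht0 hx0 (by positivity)
      (mul_le_of_le_one_right hL.le (pow_le_one₀ (by norm_num) (by norm_num))) (by positivity)
      (by
        calc F * (L * (1 / 4) ^ n) = (F * L) * (1 / 4) ^ n := by ring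
          _ ≤ (θ * ω) * (1 - θ) ^ n := by gcongr
          _ = _ := by ring)
      (by
        calc C0 * (2 * (L * (1 / 4) ^ n)) ^ α = C0 * (2 * L) ^ α * ((1 / 4) ^ n) ^ α := by
              rw [← mul_assoc, Real.mul_rpow (by positivity) hq.le]; ring
          _ ≤ ω / 4 * (1 - θ) ^ n := by gcongr
          _ = _ := by ring) hm
    refine ⟨m', ?_⟩
    have e1 : L * (1 / 4) ^ n / 4 = L * (1 / 4) ^ (n + 1) := by rw [pow_succ]; ring
    have e2 : (1 - θ) * ((1 - θ) ^ n * ω) = (1 - θ) ^ (n + 1) * ω := by rw [pow_succ]; ring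
    rw [e1, e2] at hm'
    exact hm'

/-- Interior Hölder estimate for `v = u_x` in terms of the ellipticity constants and the bounds
alone. The exponent is `δ = log_{1/4}(1 - θ)`, and `d` bounds the parabolic distance of `(t, x)`
and `(s, y)`. -/
lemma holder_of_extSol {lam Lam F C0 α L V0 : ℝ} (hlam : 0 < lam) (hLam : lam ≤ Lam)
    (hF : 0 ≤ F) (hC0 : 0 ≤ C0) (hα : 0 < α) (hL : 0 < L) (hV0 : 0 ≤ V0) :
    ∃ δ : ℝ, 0 < δ ∧ δ ≤ α ∧ ∃ C : ℝ, 0 ≤ C ∧ ∀ (τ : ℝ) (u v : ℝ → ℝ → ℝ),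
      ExtSol lam Lam F C0 α L τ u v →
      (∀ t ∈ Ico 0 τ, ∀ x ∈ Ioo (-(3 * L)) (3 * L), |v t x| ≤ V0) →
      ∀ t ∈ Ioo 0 τ, ∀ x ∈ Icc (-L) L, ∀ s ∈ Ioc 0 t, ∀ y ∈ Icc (-L) L, ∀ d, 0 < d →
        |y - x| ≤ d → t - s ≤ d ^ 2 → |v t x - v s y| ≤ C * d ^ δ := by
  obtain ⟨θ₁, hθ₁, hθ₁', hS₁⟩ := slope_bound hlam hLam
  have h4α : (1 / 4 : ℝ) ^ α < 1 := Real.rpow_lt_one (by norm_num) (by norm_num) hα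
  obtain ⟨θ, hθdef⟩ : ∃ θ, θ = min θ₁ (1 - (1 / 4 : ℝ) ^ α) := ⟨_, rfl⟩
  have hθ : 0 < θ := by rw [hθdef]; exact lt_min hθ₁ (by linarith)
  have hθ' : θ ≤ 1 / 4 := by rw [hθdef]; exact (min_le_left _ _).trans hθ₁'
  have hηα : (1 / 4 : ℝ) ^ α ≤ 1 - θ := by
    have : θ ≤ 1 - (1 / 4 : ℝ) ^ α := by rw [hθdef]; exact min_le_right _ _
    linarith
  have hS : SlopeProp lam Lam θ := SlopeProp.mono hS₁ (by rw [hθdef]; exact min_le_left _ _)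
  obtain ⟨δ, hδ⟩ : ∃ δ, δ = Real.logb (1 / 4) (1 - θ) := ⟨_, rfl⟩
  have hδη : (1 / 4 : ℝ) ^ δ = 1 - θ := by
    rw [hδ]; exact Real.rpow_logb (by norm_num) (by norm_num) (by linarith)
  have hδ0 : 0 < δ := by
    by_contra! hc
    have := Real.one_le_rpow_of_pos_of_le_one_of_nonpos (x := 1 / 4) (by norm_num) (by norm_num) hc
    linarith
  have hδα : δ ≤ α := by
    by_contra! hc
    have := Real.rpow_lt_rpow_of_exponent_gt (x := 1 / 4) (by norm_num) (by norm_num) hc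
    linarith
  obtain ⟨ω, hωdef⟩ : ∃ ω, ω = F * L / θ + 4 * (C0 * (2 * L) ^ α) + 2 * V0 + 1 := ⟨_, rfl⟩
  have b1 : 0 ≤ F * L / θ := by positivity
  have b2 : 0 ≤ 4 * (C0 * (2 * L) ^ α) := by positivity
  have hω : 0 < ω := by rw [hωdef]; linarith
  have hFω : F * L ≤ θ * ω := by
    have : F * L / θ ≤ ω := by rw [hωdef]; linarith
    rw [div_le_iff₀ hθ] at this; linarith
  refine ⟨δ, hδ0, hδα, ω * (4 / L) ^ δ, by positivity, ?_⟩
  intro τ u v h hv t ht x hx s hs y hy d hd hyx hts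
  have hd4 : ω * (4 / L) ^ δ * d ^ δ = ω * (4 * (d / L)) ^ δ := by
    rw [mul_assoc, ← Real.mul_rpow (by positivity) hd.le]; congr 2; ring
  rw [hd4]
  have hvω : ∀ t ∈ Ico 0 τ, ∀ x ∈ Ioo (-(3 * L)) (3 * L), |v t x| ≤ ω / 2 := fun t ht x hx =>
    (hv t ht x hx).trans (by rw [hωdef]; linarith)
  rcases le_or_gt d L with hdL | hdL
  · obtain ⟨n, hn1, hn2⟩ := exists_nat_pow_near_of_lt_one (x := d / L) (y := 1 / 4)
      (div_pos hd hL) ((div_le_one hL).2 hdL) (by norm_num) (by norm_num)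
    have hdn : d ≤ L * (1 / 4) ^ n := by rw [div_le_iff₀ hL] at hn2; linarith
    obtain ⟨m, hm⟩ := osc_iterate hS hθ hθ' hC0 hα hηα hL h hω hFω
      (by rw [hωdef]; linarith) hvω ht hx n
    have hq : (0:ℝ) < (1 / 4) ^ n := by positivity
    obtain ⟨c1, c2⟩ := hm t ⟨ht.1.le, le_rfl⟩ (by linarith [sq_nonneg (L * (1 / 4) ^ n)]) x
      (by rw [sub_self, abs_zero]; positivity)
    obtain ⟨c3, c4⟩ := hm s ⟨hs.1.le, hs.2⟩ (by
      have : d ^ 2 ≤ (L * (1 / 4) ^ n) ^ 2 := by gcongr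
      linarith) y (hyx.trans hdn)
    have hfin : (1 - θ) ^ n ≤ (4 * (d / L)) ^ δ := by
      rw [← hδη, ← Real.rpow_natCast, ← Real.rpow_mul (by norm_num), mul_comm,
        Real.rpow_mul (by norm_num), Real.rpow_natCast]
      apply Real.rpow_le_rpow hq.le _ hδ0.le
      rw [pow_succ] at hn1
      linarith
    have : |v t x - v s y| ≤ (1 - θ) ^ n * ω := by
      rw [abs_le]; constructor <;> linarith
    refine this.trans ?_
    rw [mul_comm]
    gcongr
  · have hxI : ∀ x ∈ Icc (-L) L, x ∈ Ioo (-(3 * L)) (3 * L) := fun x hx =>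
      ⟨by linarith [hx.1], by linarith [hx.2]⟩
    have e1 := abs_le.1 (hvω t ⟨ht.1.le, ht.2⟩ x (hxI x hx))
    have e2 := abs_le.1 (hvω s ⟨hs.1.le, hs.2.trans_lt ht.2⟩ y (hxI y hy))
    have : |v t x - v s y| ≤ ω * 1 := by
      rw [abs_le]; constructor <;> linarith [e1.1, e1.2, e2.1, e2.2]
    refine this.trans ?_
    have : 1 ≤ d / L := (one_le_div hL).2 hdL.le
    gcongr
    exact Real.one_le_rpow (by linarith) hδ0.le

/-! ### A concave barrier -/

/-- A function `φ` with `φ(0) = 0`, `φ(s1) > 2M` and `φ'' < -ψ(φ')`, whose slope `p = φ'` decreases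
from `q₁` to `q₀` on `[0, s1]`. It solves `p' = -κ ψ(p)` where `κ > 1` is so close to `1` that
`φ(s1) = κ⁻¹ ∫ ρ/ψ(ρ) dρ > 2M`, and `p` is found by inverting `ρ ↦ ∫ 1/(κψ)`. -/
lemma exists_barrier {ψ : ℝ → ℝ} {M q₀ q₁ : ℝ} (hM : 0 < M) (hq : q₀ < q₁)
    (hψc : ContinuousOn ψ (Icc q₀ q₁)) (hψ1 : ∀ ρ ∈ Icc q₀ q₁, 1 ≤ ψ ρ)
    (hI : 2 * M < ∫ ρ in q₀..q₁, ρ / ψ ρ) :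
    ∃ (s1 : ℝ) (φ p p' : ℝ → ℝ), 0 < s1 ∧ (∀ s, HasDerivAt φ (p s) s) ∧
      (∀ s, HasDerivAt p (p' s) s) ∧ φ 0 = 0 ∧ p 0 = q₁ ∧ 2 * M < φ s1 ∧
      ∀ s ∈ Icc 0 s1, q₀ ≤ p s ∧ p s ≤ q₁ ∧ p' s < -ψ (p s) := by
  obtain ⟨I, hIe⟩ : ∃ I, I = ∫ ρ in q₀..q₁, ρ / ψ ρ := ⟨_, rfl⟩
  rw [← hIe] at hI
  obtain ⟨κ, hκ⟩ : ∃ κ, κ = (1 + I / (2 * M)) / 2 := ⟨_, rfl⟩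
  have hr : 1 < I / (2 * M) := (one_lt_div (by linarith)).2 hI
  have hκ1 : 1 < κ := by rw [hκ]; linarith
  have hκI : κ < I / (2 * M) := by rw [hκ]; linarith
  have hκ0 : 0 < κ := by linarith
  have hκM : 2 * M < I / κ := by
    rw [lt_div_iff₀ hκ0]; rw [lt_div_iff₀ (by linarith)] at hκI; linarith
  -- `P` extends `κ ψ` by constants outside `[q₀, q₁]`, so that the ODE is solvable on the whole line
  obtain ⟨c, hc⟩ : ∃ c : ℝ → ℝ, c = fun ρ => max q₀ (min q₁ ρ) := ⟨_, rfl⟩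
  have hcm : ∀ ρ, c ρ ∈ Icc q₀ q₁ := fun ρ => by
    rw [hc]; exact ⟨le_max_left _ _, max_le hq.le (min_le_left _ _)⟩
  have hcid : ∀ ρ ∈ Icc q₀ q₁, c ρ = ρ := fun ρ h => by
    rw [hc]; simp only; rw [min_eq_right h.2, max_eq_right h.1]
  have hcc : Continuous c := by rw [hc]; fun_prop
  obtain ⟨P, hP⟩ : ∃ P : ℝ → ℝ, P = fun ρ => κ * ψ (c ρ) := ⟨_, rfl⟩
  have hPc : Continuous P := by
    rw [hP]
    exact continuous_const.mul (hψc.comp_continuous hcc hcm)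
  have hP1 : ∀ ρ, κ ≤ P ρ := fun ρ => by
    rw [hP]; simp only; nlinarith [hψ1 _ (hcm ρ)]
  have hPpos : ∀ ρ, 0 < P ρ := fun ρ => hκ0.trans_le (hP1 ρ)
  obtain ⟨B, hB⟩ : ∃ B, ∀ ρ, P ρ ≤ B := by
    obtain ⟨B, hB⟩ := (isCompact_Icc.image_of_continuousOn hψc).bddAbove
    refine ⟨κ * B, fun ρ => ?_⟩
    rw [hP]
    exact mul_le_mul_of_nonneg_left (hB ⟨_, hcm ρ, rfl⟩) hκ0.le
  have hBpos : 0 < B := (hPpos 0).trans_le (hB 0)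
  have hic : Continuous fun ρ => 1 / P ρ := continuous_const.div hPc fun ρ => (hPpos ρ).ne'
  have hjc : Continuous fun ρ => ρ / P ρ := continuous_id.div hPc fun ρ => (hPpos ρ).ne'
  obtain ⟨G, hG⟩ : ∃ G : ℝ → ℝ, G = fun ρ => ∫ r in q₀..ρ, 1 / P r := ⟨_, rfl⟩
  obtain ⟨H, hH⟩ : ∃ H : ℝ → ℝ, H = fun ρ => ∫ r in q₀..ρ, r / P r := ⟨_, rfl⟩
  have hGd : ∀ ρ, HasDerivAt G (1 / P ρ) ρ := fun ρ => by
    rw [hG]; exact (hic.integral_hasStrictDerivAt q₀ ρ).hasDerivAt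
  have hHd : ∀ ρ, HasDerivAt H (ρ / P ρ) ρ := fun ρ => by
    rw [hH]; exact (hjc.integral_hasStrictDerivAt q₀ ρ).hasDerivAt
  have hGq : G q₀ = 0 := by rw [hG]; simp
  have hHq : H q₀ = 0 := by rw [hH]; simp
  have hGc : Continuous G := continuous_iff_continuousAt.2 fun ρ => (hGd ρ).continuousAt
  have hGm : StrictMono G := strictMono_of_deriv_pos fun ρ => by
    rw [(hGd ρ).deriv]; exact one_div_pos.2 (hPpos ρ)
  have hGlow : ∀ x y, x ≤ y → 1 / B * (y - x) ≤ G y - G x := by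
    intro x y hxy
    refine mul_sub_le_image_sub_of_le_deriv (fun ρ => (hGd ρ).differentiableAt) ?_ hxy
    intro ρ
    rw [(hGd ρ).deriv]
    exact one_div_le_one_div_of_le (hPpos ρ) (hB ρ)
  have hsurj : Function.Surjective G := by
    refine hGc.surjective ?_ ?_
    · refine tendsto_atTop_mono' _ (f₁ := fun ρ => 1 / B * (ρ - q₀)) ?_ ?_
      · filter_upwards [eventually_ge_atTop q₀] with ρ hρ
        linarith [hGlow q₀ ρ hρ]
      · exact (tendsto_atTop_add_const_right _ _ tendsto_id).const_mul_atTop (by positivity)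
    · refine tendsto_atBot_mono' _ (f₁ := fun ρ => 1 / B * (ρ - q₀)) ?_ ?_
      · filter_upwards [eventually_le_atBot q₀] with ρ hρ
        linarith [hGlow ρ q₀ hρ]
      · exact (tendsto_atBot_add_const_right _ _ tendsto_id).const_mul_atBot (by positivity)
  let e := hGm.orderIsoOfSurjective G hsurj
  obtain ⟨N, hN⟩ : ∃ N : ℝ → ℝ, N = e.symm := ⟨_, rfl⟩
  have hGN : ∀ s, G (N s) = s := fun s => by rw [hN]; exact e.apply_symm_apply s
  have hNG : ∀ ρ, N (G ρ) = ρ := fun ρ => hGm.injective (hGN _)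
  have hNc : Continuous N := by rw [hN]; exact e.symm.continuous
  have hNm : Monotone N := by rw [hN]; exact e.symm.monotone
  have hNd : ∀ s, HasDerivAt N (P (N s)) s := fun s => by
    have := HasDerivAt.of_local_left_inverse (hNc.continuousAt (x := s)) (hGd (N s))
      (one_div_pos.2 (hPpos _)).ne' (Eventually.of_forall hGN)
    simpa using this
  have hpd : ∀ s, HasDerivAt (fun s => N (G q₁ - s)) (-P (N (G q₁ - s))) s := fun s => by
    have := (hNd (G q₁ - s)).comp s ((hasDerivAt_id s).const_sub (G q₁))
    simpa [Function.comp_def] using this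
  have hG1 : 0 < G q₁ := hGq ▸ hGm hq
  refine ⟨G q₁, fun s => H q₁ - H (N (G q₁ - s)), fun s => N (G q₁ - s),
    fun s => -P (N (G q₁ - s)), hG1, fun s => ?_, hpd, ?_, ?_, ?_, fun s hs => ?_⟩
  · have := ((hHd (N (G q₁ - s))).comp s (hpd s)).const_sub (H q₁)
    refine this.congr_deriv ?_
    have h0 := (hPpos (N (G q₁ - s))).ne'
    field_simp
  · simp [hNG]
  · simp [hNG]
  · have h1 : H q₁ = I / κ := by
      rw [hH, hIe, ← intervalIntegral.integral_div]
      refine intervalIntegral.integral_congr fun ρ hρ => ?_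
      rw [uIcc_of_le hq.le] at hρ
      simp only [hP]
      rw [hcid ρ hρ, div_div, mul_comm]
    have h2 : N (G q₁ - G q₁) = q₀ := by rw [sub_self, ← hGq, hNG]
    simp only [h2, hHq, h1, sub_zero, hκM]
  · have h0 : q₀ ≤ N (G q₁ - s) := by
      calc q₀ = N (G q₀) := (hNG _).symm
        _ ≤ _ := hNm (by rw [hGq]; linarith [hs.2])
    have h1 : N (G q₁ - s) ≤ q₁ := by
      calc N (G q₁ - s) ≤ N (G q₁) := hNm (by linarith [hs.1])
        _ = q₁ := hNG _
    refine ⟨h0, h1, ?_⟩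
    simp only [hP]
    rw [hcid _ ⟨h0, h1⟩]
    nlinarith [hψ1 _ ⟨h0, h1⟩]

/-! ### Gradient bound by doubling of variables -/

/-- Doubling of variables: `u(t,x) - u(t,y) ≤ φ(x - y)` for `0 ≤ x - y ≤ s1`. At a positive maximum
of `u(t,x) - u(t,y) - φ(x - y) - ε t` the slope of `u` at `x` and at `y` equals `φ'(x - y)` if
the point is interior, and is at least `φ'(x - y) ≥ q₀` if it is an endpoint. Then `φ'' < -ψ(φ')`,
respectively the boundary condition, gives `u_t(t,x) ≤ 0 ≤ u_t(t,y)`, against maximality in `t`. -/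
lemma osc_le_barrier {ℓ τ M q₀ s1 : ℝ} {ψ φ p p' : ℝ → ℝ} {u v w k : ℝ → ℝ → ℝ}
    (hq0 : 0 ≤ q₀) (hs1 : 0 < s1) (hφ : ∀ s, HasDerivAt φ (p s) s)
    (hp : ∀ s, HasDerivAt p (p' s) s) (hφ0 : φ 0 = 0) (hφ1 : 2 * M < φ s1)
    (hpq : ∀ s ∈ Icc 0 s1, q₀ ≤ p s ∧ p' s < -ψ (p s))
    (hcont : ContinuousOn (fun q : ℝ × ℝ => u q.1 q.2) (Icc 0 τ ×ˢ Icc (-ℓ) ℓ))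
    (hw : ∀ t ∈ Ioo 0 τ, ∀ x ∈ Icc (-ℓ) ℓ, HasDerivAt (fun s => u s x) (w t x) t)
    (hv : ∀ t ∈ Ioo 0 τ, ∀ x ∈ Icc (-ℓ) ℓ, HasDerivAt (u t) (v t x) x)
    (hk : ∀ t ∈ Ioo 0 τ, ∀ x ∈ Ioo (-ℓ) ℓ, HasDerivAt (v t) (k t x) x)
    (heq : ∀ t ∈ Ioo 0 τ, ∀ x ∈ Ioo (-ℓ) ℓ,
      ∃ A, 0 < A ∧ |w t x - A * k t x| ≤ A * ψ |v t x|)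
    (hb1 : ∀ t ∈ Ioo 0 τ, q₀ ≤ v t ℓ → w t ℓ ≤ 0)
    (hb2 : ∀ t ∈ Ioo 0 τ, q₀ ≤ v t (-ℓ) → 0 ≤ w t (-ℓ))
    (hM : ∀ t ∈ Icc 0 τ, ∀ x ∈ Icc (-ℓ) ℓ, |u t x| ≤ M)
    (h0 : ∀ x ∈ Icc (-ℓ) ℓ, ∀ y ∈ Icc (-ℓ) ℓ, y ≤ x → u 0 x - u 0 y ≤ q₀ * (x - y)) :
    ∀ t ∈ Ioo 0 τ, ∀ x ∈ Icc (-ℓ) ℓ, ∀ y ∈ Icc (-ℓ) ℓ, y ≤ x → x - y ≤ s1 →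
      u t x - u t y ≤ φ (x - y) := by
  have hφc : Continuous φ := continuous_iff_continuousAt.2 fun s => (hφ s).continuousAt
  have key : ∀ ε, 0 < ε → ∀ t2 ∈ Ioo 0 τ, ∀ x ∈ Icc (-ℓ) ℓ, ∀ y ∈ Icc (-ℓ) ℓ, y ≤ x →
      x - y ≤ s1 → u t2 x - u t2 y - φ (x - y) - ε * t2 ≤ 0 := by
    intro ε hε t2 ht2 x2 hx2 y2 hy2 hxy2 hs2
    obtain ⟨Θ, hΘ⟩ : ∃ Θ : ℝ × ℝ × ℝ → ℝ, Θ = fun q =>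
      u q.1 q.2.1 - u q.1 q.2.2 - φ (q.2.1 - q.2.2) - ε * q.1 := ⟨_, rfl⟩
    obtain ⟨S, hS⟩ : ∃ S : Set (ℝ × ℝ × ℝ), S = (Icc 0 t2 ×ˢ Icc (-ℓ) ℓ ×ˢ Icc (-ℓ) ℓ) ∩
      (fun q : ℝ × ℝ × ℝ => q.2.1 - q.2.2) ⁻¹' Icc 0 s1 := ⟨_, rfl⟩
    have hScomp : IsCompact S := by
      rw [hS]
      exact (isCompact_Icc.prod (isCompact_Icc.prod isCompact_Icc)).inter_right
        (isClosed_Icc.preimage (by fun_prop))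
    have hΘc : ContinuousOn Θ S := by
      have h1 : ContinuousOn (fun q : ℝ × ℝ × ℝ => u q.1 q.2.1) S :=
        hcont.comp (f := fun q : ℝ × ℝ × ℝ => (q.1, q.2.1)) (by fun_prop) (fun q hq => by
          rw [hS] at hq
          exact ⟨⟨hq.1.1.1, hq.1.1.2.trans ht2.2.le⟩, hq.1.2.1⟩)
      have h2 : ContinuousOn (fun q : ℝ × ℝ × ℝ => u q.1 q.2.2) S :=
        hcont.comp (f := fun q : ℝ × ℝ × ℝ => (q.1, q.2.2)) (by fun_prop) (fun q hq => by
          rw [hS] at hq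
          exact ⟨⟨hq.1.1.1, hq.1.1.2.trans ht2.2.le⟩, hq.1.2.2⟩)
      rw [hΘ]
      have h3 : Continuous fun q : ℝ × ℝ × ℝ => φ (q.2.1 - q.2.2) := by fun_prop
      have h4 : Continuous fun q : ℝ × ℝ × ℝ => ε * q.1 := by fun_prop
      exact ((h1.sub h2).sub h3.continuousOn).sub h4.continuousOn
    have hmem2 : (t2, x2, y2) ∈ S := by
      rw [hS]
      exact ⟨⟨⟨ht2.1.le, le_rfl⟩, hx2, hy2⟩, ⟨by simpa using hxy2, hs2⟩⟩
    obtain ⟨⟨t, x, y⟩, hmS, hmax⟩ := hScomp.exists_isMaxOn ⟨_, hmem2⟩ hΘc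
    have hmax' : ∀ t' ∈ Icc 0 t2, ∀ x' ∈ Icc (-ℓ) ℓ, ∀ y' ∈ Icc (-ℓ) ℓ, 0 ≤ x' - y' →
        x' - y' ≤ s1 → u t' x' - u t' y' - φ (x' - y') - ε * t' ≤
          u t x - u t y - φ (x - y) - ε * t := by
      intro t' ht' x' hx' y' hy' h1 h2
      have := hmax (show (t', x', y') ∈ S by rw [hS]; exact ⟨⟨ht', hx', hy'⟩, h1, h2⟩)
      simpa [hΘ] using this
    rw [hS] at hmS
    obtain ⟨⟨ht, hx, hy⟩, hxy⟩ := hmS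
    simp only [mem_preimage] at ht hx hy hxy
    refine (hmax' t2 ⟨ht2.1.le, le_rfl⟩ x2 hx2 y2 hy2 (by linarith) hs2).trans ?_
    by_contra! hpos
    have htτ : t ∈ Icc 0 τ := ⟨ht.1, ht.2.trans ht2.2.le⟩
    have hεt : 0 ≤ ε * t := mul_nonneg hε.le ht.1
    have hs0 : 0 < x - y := by
      refine hxy.1.lt_of_ne fun h => ?_
      have : x = y := by linarith
      rw [this, sub_self, sub_self, hφ0] at hpos
      linarith
    have hss : x - y < s1 := by
      refine hxy.2.lt_of_ne fun h => ?_
      rw [h] at hpos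
      have h1 := abs_le.1 (hM t htτ x hx)
      have h2 := abs_le.1 (hM t htτ y hy)
      linarith [h1.2, h2.1]
    have ht0 : 0 < t := by
      refine ht.1.lt_of_ne fun h => ?_
      rw [← h] at hpos
      have h2 : q₀ * (x - y - 0) ≤ φ (x - y) - φ 0 := by
        refine (convex_Icc 0 s1).mul_sub_le_image_sub_of_le_deriv hφc.continuousOn
          (fun s _ => (hφ s).differentiableAt.differentiableWithinAt) ?_ 0 ⟨le_rfl, hs1.le⟩
          (x - y) hxy hs0.le
        intro s hs
        rw [interior_Icc] at hs
        rw [(hφ s).deriv]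
        exact (hpq s (Ioo_subset_Icc_self hs)).1
      have h3 := h0 x hx y hy (by linarith)
      linarith
    have htI : t ∈ Ioo 0 τ := ⟨ht0, ht.2.trans_lt ht2.2⟩
    have hps := hpq (x - y) hxy
    have hpabs : |p (x - y)| = p (x - y) := abs_of_nonneg (hq0.trans hps.1)
    -- `u(t, ·) - φ(· - y)` is maximal at `x`
    have hA : w t x ≤ 0 := by
      rcases hx.2.lt_or_eq with hxl | hxl
      · have hxI : x ∈ Ioo (-ℓ) ℓ := ⟨by linarith [hy.1], hxl⟩
        have hlm : IsLocalMax (fun ξ => u t ξ - φ (ξ - y)) x := by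
          filter_upwards [Ioo_mem_nhds hxI.1 hxI.2, Ioo_mem_nhds (show y < x by linarith)
            (show x < y + s1 by linarith)] with ξ h1 h2
          have := hmax' t ht ξ (Ioo_subset_Icc_self h1) y hy (by linarith [h2.1])
            (by linarith [h2.2])
          linarith
        have hd : ∀ ξ ∈ Icc (-ℓ) ℓ,
            HasDerivAt (fun ξ => u t ξ - φ (ξ - y)) (v t ξ - p (ξ - y)) ξ := fun ξ hξ =>
          (hv t htI ξ hξ).sub ((hφ (ξ - y)).comp_sub_const ξ y)
        have h1 := hlm.hasDerivAt_eq_zero (hd x hx)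
        have h2 : k t x - p' (x - y) ≤ 0 := by
          refine second_deriv_nonpos (g := fun ξ => v t ξ - p (ξ - y)) ?_ hlm (Or.inl
            ((hk t htI x hxI).sub ((hp (x - y)).comp_sub_const x y)).hasDerivWithinAt)
          filter_upwards [Icc_mem_nhds hxI.1 hxI.2] with ξ hξ using hd ξ hξ
        obtain ⟨A, hA0, hA⟩ := heq t htI x hxI
        rw [show v t x = p (x - y) by linarith, hpabs] at hA
        have h3 := (abs_le.1 hA).2
        nlinarith [hps.2]
      · rw [hxl]
        apply hb1 t htI
        have : 0 ≤ v t x - p (x - y) := by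
          refine deriv_nonneg_of_left_max (f := fun ξ => u t ξ - φ (ξ - y)) (t' := y)
            ((hv t htI x hx).sub ((hφ (x - y)).comp_sub_const x y)).hasDerivWithinAt
            (by linarith) fun ξ hξ => ?_
          have := hmax' t ht ξ ⟨hy.1.trans hξ.1, hξ.2.trans hx.2⟩ y hy (by linarith [hξ.1])
            (by linarith [hξ.2])
          linarith
        rw [← hxl]; linarith [hps.1]
    have hB : 0 ≤ w t y := by
      rcases hy.1.lt_or_eq with hyl | hyl
      · have hyI : y ∈ Ioo (-ℓ) ℓ := ⟨hyl, by linarith [hx.2]⟩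
        have hlm : IsLocalMax (fun η => -u t η - φ (x - η)) y := by
          filter_upwards [Ioo_mem_nhds hyI.1 hyI.2, Ioo_mem_nhds (show x - s1 < y by linarith)
            (show y < x by linarith)] with η h1 h2
          have := hmax' t ht x hx η (Ioo_subset_Icc_self h1) (by linarith [h2.2])
            (by linarith [h2.1])
          linarith
        have hd : ∀ η ∈ Icc (-ℓ) ℓ,
            HasDerivAt (fun η => -u t η - φ (x - η)) (-v t η - -p (x - η)) η := fun η hη =>
          (hv t htI η hη).neg.sub ((hφ (x - η)).comp_const_sub x η)
        have h1 := hlm.hasDerivAt_eq_zero (hd y hy)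
        have h2 : -k t y - - -p' (x - y) ≤ 0 := by
          refine second_deriv_nonpos (g := fun η => -v t η - -p (x - η)) ?_ hlm (Or.inl
            ((hk t htI y hyI).neg.sub ((hp (x - y)).comp_const_sub x y).neg).hasDerivWithinAt)
          filter_upwards [Icc_mem_nhds hyI.1 hyI.2] with ξ hξ using hd ξ hξ
        obtain ⟨A, hA0, hA⟩ := heq t htI y hyI
        rw [show v t y = p (x - y) by linarith, hpabs] at hA
        have h3 := (abs_le.1 hA).1
        nlinarith [hps.2]
      · rw [← hyl]
        apply hb2 t htI
        have : -v t y - -p (x - y) ≤ 0 := by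
          refine deriv_nonpos_of_right_max (f := fun η => -u t η - φ (x - η)) (t' := x)
            ((hv t htI y hy).neg.sub ((hφ (x - y)).comp_const_sub x y)).hasDerivWithinAt
            (by linarith) fun η hη => ?_
          have := hmax' t ht x hx η ⟨hy.1.trans hη.1, hη.2.trans hx.2⟩ (by linarith [hη.2])
            (by linarith [hη.1])
          linarith
        rw [hyl]; linarith [hps.1]
    have hC : 0 ≤ w t x - w t y - ε * 1 := by
      refine deriv_nonneg_of_left_max (f := fun σ => u σ x - u σ y - ε * σ) (t' := 0)
        (((hw t htI x hx).sub (hw t htI y hy)).sub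
          ((hasDerivAt_id t).const_mul ε)).hasDerivWithinAt ht0 fun σ hσ => ?_
      have := hmax' σ ⟨hσ.1, hσ.2.trans ht.2⟩ x hx y hy hxy.1 hxy.2
      linarith
    linarith
  intro t ht x hx y hy hxy hs
  refine le_of_forall_pos_le_add fun ε hε => ?_
  have := key (ε / t) (div_pos hε ht.1) t ht x hx y hy hxy hs
  rw [div_mul_cancel₀ _ ht.1.ne'] at this
  linarith

/-- The case `y → x` of `osc_le_barrier`; at the right endpoint `x = ℓ` the first variable is fixed
instead. -/
lemma gradient_upper {ℓ τ M q₀ q₁ s1 : ℝ} {ψ φ p p' : ℝ → ℝ} {u v w k : ℝ → ℝ → ℝ}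
    (hl : 0 < ℓ) (hq0 : 0 ≤ q₀) (hs1 : 0 < s1) (hφ : ∀ s, HasDerivAt φ (p s) s)
    (hp : ∀ s, HasDerivAt p (p' s) s) (hφ0 : φ 0 = 0) (hp0 : p 0 = q₁) (hφ1 : 2 * M < φ s1)
    (hpq : ∀ s ∈ Icc 0 s1, q₀ ≤ p s ∧ p' s < -ψ (p s))
    (hcont : ContinuousOn (fun q : ℝ × ℝ => u q.1 q.2) (Icc 0 τ ×ˢ Icc (-ℓ) ℓ))
    (hw : ∀ t ∈ Ioo 0 τ, ∀ x ∈ Icc (-ℓ) ℓ, HasDerivAt (fun s => u s x) (w t x) t)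
    (hv : ∀ t ∈ Ioo 0 τ, ∀ x ∈ Icc (-ℓ) ℓ, HasDerivAt (u t) (v t x) x)
    (hk : ∀ t ∈ Ioo 0 τ, ∀ x ∈ Ioo (-ℓ) ℓ, HasDerivAt (v t) (k t x) x)
    (heq : ∀ t ∈ Ioo 0 τ, ∀ x ∈ Ioo (-ℓ) ℓ,
      ∃ A, 0 < A ∧ |w t x - A * k t x| ≤ A * ψ |v t x|)
    (hb1 : ∀ t ∈ Ioo 0 τ, q₀ ≤ v t ℓ → w t ℓ ≤ 0)
    (hb2 : ∀ t ∈ Ioo 0 τ, q₀ ≤ v t (-ℓ) → 0 ≤ w t (-ℓ))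
    (hM : ∀ t ∈ Icc 0 τ, ∀ x ∈ Icc (-ℓ) ℓ, |u t x| ≤ M)
    (h0 : ∀ x ∈ Icc (-ℓ) ℓ, ∀ y ∈ Icc (-ℓ) ℓ, y ≤ x → u 0 x - u 0 y ≤ q₀ * (x - y)) :
    ∀ t ∈ Ioo 0 τ, ∀ x ∈ Icc (-ℓ) ℓ, v t x ≤ q₁ := by
  intro t ht x hx
  have key := osc_le_barrier hq0 hs1 hφ hp hφ0 hφ1 hpq hcont hw hv hk heq hb1 hb2 hM h0 t ht
  rcases hx.2.lt_or_eq with hxl | hxl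
  · have : v t x - p (x - x) ≤ 0 := by
      refine deriv_nonpos_of_right_max (f := fun ξ => u t ξ - φ (ξ - x)) (t' := min ℓ (x + s1))
        ((hv t ht x hx).sub ((hφ (x - x)).comp_sub_const x x)).hasDerivWithinAt
        (lt_min hxl (by linarith)) fun ξ hξ => ?_
      have h1 := hξ.2.trans (min_le_left _ _)
      have h2 := hξ.2.trans (min_le_right _ _)
      have := key ξ ⟨hx.1.trans hξ.1, h1⟩ x hx hξ.1 (by linarith)
      rw [sub_self, hφ0]; linarith
    rw [sub_self, hp0] at this
    linarith
  · have : 0 ≤ -v t x - -p (x - x) := by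
      refine deriv_nonneg_of_left_max (f := fun η => -u t η - φ (x - η))
        (t' := max (-ℓ) (x - s1))
        ((hv t ht x hx).neg.sub ((hφ (x - x)).comp_const_sub x x)).hasDerivWithinAt
        (max_lt (by linarith) (by linarith)) fun η hη => ?_
      have h1 := (le_max_left _ _).trans hη.1
      have h2 := (le_max_right _ _).trans hη.1
      have := key x hx η ⟨h1, hη.2.trans hx.2⟩ hη.2 (by linarith)
      rw [sub_self, hφ0]; linarith
    rw [sub_self, hp0] at this
    linarith

/-- `gradient_upper` for `u` and for `-u`. -/
lemma gradient_bound {ℓ τ M q₀ q₁ s1 : ℝ} {ψ φ p p' : ℝ → ℝ} {u v w k : ℝ → ℝ → ℝ}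
    (hl : 0 < ℓ) (hq0 : 0 ≤ q₀) (hs1 : 0 < s1) (hφ : ∀ s, HasDerivAt φ (p s) s)
    (hp : ∀ s, HasDerivAt p (p' s) s) (hφ0 : φ 0 = 0) (hp0 : p 0 = q₁) (hφ1 : 2 * M < φ s1)
    (hpq : ∀ s ∈ Icc 0 s1, q₀ ≤ p s ∧ p' s < -ψ (p s))
    (hcont : ContinuousOn (fun q : ℝ × ℝ => u q.1 q.2) (Icc 0 τ ×ˢ Icc (-ℓ) ℓ))
    (hw : ∀ t ∈ Ioo 0 τ, ∀ x ∈ Icc (-ℓ) ℓ, HasDerivAt (fun s => u s x) (w t x) t)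
    (hv : ∀ t ∈ Ioo 0 τ, ∀ x ∈ Icc (-ℓ) ℓ, HasDerivAt (u t) (v t x) x)
    (hk : ∀ t ∈ Ioo 0 τ, ∀ x ∈ Ioo (-ℓ) ℓ, HasDerivAt (v t) (k t x) x)
    (heq : ∀ t ∈ Ioo 0 τ, ∀ x ∈ Ioo (-ℓ) ℓ,
      ∃ A, 0 < A ∧ |w t x - A * k t x| ≤ A * ψ |v t x|)
    (hb1 : ∀ t ∈ Ioo 0 τ, q₀ ≤ v t ℓ → w t ℓ ≤ 0)
    (hb2 : ∀ t ∈ Ioo 0 τ, q₀ ≤ v t (-ℓ) → 0 ≤ w t (-ℓ))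
    (hb3 : ∀ t ∈ Ioo 0 τ, v t ℓ ≤ -q₀ → 0 ≤ w t ℓ)
    (hb4 : ∀ t ∈ Ioo 0 τ, v t (-ℓ) ≤ -q₀ → w t (-ℓ) ≤ 0)
    (hM : ∀ t ∈ Icc 0 τ, ∀ x ∈ Icc (-ℓ) ℓ, |u t x| ≤ M)
    (h0 : ∀ x ∈ Icc (-ℓ) ℓ, ∀ y ∈ Icc (-ℓ) ℓ, |u 0 x - u 0 y| ≤ q₀ * |x - y|) :
    ∀ t ∈ Ioo 0 τ, ∀ x ∈ Icc (-ℓ) ℓ, |v t x| ≤ q₁ := by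
  intro t ht x hx
  have h0' : ∀ x ∈ Icc (-ℓ) ℓ, ∀ y ∈ Icc (-ℓ) ℓ, y ≤ x →
      -(q₀ * (x - y)) ≤ u 0 x - u 0 y ∧ u 0 x - u 0 y ≤ q₀ * (x - y) := fun x hx y hy hxy => by
    have := h0 x hx y hy
    rwa [abs_of_nonneg (sub_nonneg.2 hxy), abs_le] at this
  refine abs_le.2 ⟨?_, gradient_upper hl hq0 hs1 hφ hp hφ0 hp0 hφ1 hpq hcont hw hv hk heq hb1
    hb2 hM (fun x hx y hy hxy => (h0' x hx y hy hxy).2) t ht x hx⟩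
  have := gradient_upper (u := fun t x => -u t x) (v := fun t x => -v t x)
    (w := fun t x => -w t x) (k := fun t x => -k t x) hl hq0 hs1 hφ hp hφ0 hp0 hφ1 hpq hcont.neg
    (fun t ht x hx => (hw t ht x hx).neg) (fun t ht x hx => (hv t ht x hx).neg)
    (fun t ht x hx => (hk t ht x hx).neg)
    (fun t ht x hx => by
      obtain ⟨A, h1, h2⟩ := heq t ht x hx
      refine ⟨A, h1, ?_⟩
      rw [abs_neg, show -w t x - A * -k t x = -(w t x - A * k t x) by ring, abs_neg]
      exact h2)
    (fun t ht h => by linarith [hb3 t ht (by linarith)])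
    (fun t ht h => by linarith [hb4 t ht (by linarith)])
    (fun t ht x hx => by rw [abs_neg]; exact hM t ht x hx)
    (fun x hx y hy hxy => by linarith [(h0' x hx y hy hxy).1]) t ht x hx
  linarith

/-! ### Reflection across the lateral boundary -/

/-- The fold of `[-3ℓ, 3ℓ]` onto `[-ℓ, ℓ]` by reflection in the points `±ℓ`. -/
def foldPt (ℓ x : ℝ) : ℝ := if ℓ < x then 2 * ℓ - x else if x < -ℓ then -(2 * ℓ) - x else x

/-- The extension of `u(t, ·)` from `[-ℓ, ℓ]` to `[-3ℓ, 3ℓ]` by odd reflection in the points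
`(±ℓ, u(t, ±ℓ))` of its graph; its spatial derivative is the even extension `u_x ∘ foldPt`. -/
def oddExt (ℓ : ℝ) (u : ℝ → ℝ → ℝ) (t x : ℝ) : ℝ :=
  if ℓ < x then 2 * u t ℓ - u t (2 * ℓ - x)
  else if x < -ℓ then 2 * u t (-ℓ) - u t (-(2 * ℓ) - x) else u t x

section Reflection
variable {ℓ : ℝ}

lemma foldPt_mid {x : ℝ} (hx : x ∈ Icc (-ℓ) ℓ) : foldPt ℓ x = x := by
  rw [foldPt, if_neg (not_lt.2 hx.2), if_neg (not_lt.2 hx.1)]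

lemma foldPt_right (hl : 0 < ℓ) {x : ℝ} (hx : ℓ ≤ x) : foldPt ℓ x = 2 * ℓ - x := by
  rcases hx.lt_or_eq with h | h
  · rw [foldPt, if_pos h]
  · rw [← h, foldPt_mid ⟨by linarith, le_rfl⟩]; ring

lemma foldPt_left (hl : 0 < ℓ) {x : ℝ} (hx : x ≤ -ℓ) : foldPt ℓ x = -(2 * ℓ) - x := by
  rcases hx.lt_or_eq with h | h
  · rw [foldPt, if_neg (by linarith), if_pos h]
  · rw [h, foldPt_mid ⟨le_rfl, by linarith⟩]; ring

lemma oddExt_mid {u : ℝ → ℝ → ℝ} {t x : ℝ} (hx : x ∈ Icc (-ℓ) ℓ) :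
    oddExt ℓ u t x = u t x := by
  rw [oddExt, if_neg (not_lt.2 hx.2), if_neg (not_lt.2 hx.1)]

lemma oddExt_right (hl : 0 < ℓ) {u : ℝ → ℝ → ℝ} {t x : ℝ} (hx : ℓ ≤ x) :
    oddExt ℓ u t x = 2 * u t ℓ - u t (2 * ℓ - x) := by
  rcases hx.lt_or_eq with h | h
  · rw [oddExt, if_pos h]
  · rw [← h, oddExt_mid ⟨by linarith, le_rfl⟩, show 2 * ℓ - ℓ = ℓ by ring]; ring

lemma oddExt_left (hl : 0 < ℓ) {u : ℝ → ℝ → ℝ} {t x : ℝ} (hx : x ≤ -ℓ) :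
    oddExt ℓ u t x = 2 * u t (-ℓ) - u t (-(2 * ℓ) - x) := by
  rcases hx.lt_or_eq with h | h
  · rw [oddExt, if_neg (by linarith), if_pos h]
  · rw [h, oddExt_mid ⟨le_rfl, by linarith⟩, show -(2 * ℓ) - -ℓ = -ℓ by ring]; ring

lemma foldPt_mem {x : ℝ} (hx : x ∈ Ioo (-(3 * ℓ)) (3 * ℓ)) :
    foldPt ℓ x ∈ Icc (-ℓ) ℓ := by
  rw [foldPt]
  split_ifs with h1 h2
  · exact ⟨by linarith [hx.2], by linarith⟩
  · exact ⟨by linarith, by linarith [hx.1]⟩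
  · exact ⟨not_lt.1 h2, not_lt.1 h1⟩

lemma foldPt_lipschitz (hl : 0 < ℓ) (x y : ℝ) : |foldPt ℓ x - foldPt ℓ y| ≤ |x - y| := by
  rw [foldPt, foldPt]
  split_ifs <;> rw [abs_le] <;> rcases abs_cases (x - y) with h | h <;> constructor <;> linarith

lemma oddExt_continuousOn (hl : 0 < ℓ) {τ : ℝ} {u : ℝ → ℝ → ℝ}
    (hcont : ContinuousOn (fun q : ℝ × ℝ => u q.1 q.2) (Icc 0 τ ×ˢ Icc (-ℓ) ℓ)) :
    ContinuousOn (fun q : ℝ × ℝ => oddExt ℓ u q.1 q.2)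
      (Ico 0 τ ×ˢ Ioo (-(3 * ℓ)) (3 * ℓ)) := by
  obtain ⟨c, hc⟩ : ∃ c : ℝ → ℝ, c = fun x => max (-ℓ) (min ℓ x) := ⟨_, rfl⟩
  have hcc : Continuous c := by rw [hc]; fun_prop
  have hcm : ∀ x, c x ∈ Icc (-ℓ) ℓ := fun x => by
    rw [hc]; exact ⟨le_max_left _ _, max_le (by linarith) (min_le_left _ _)⟩
  have h1 : ∀ x, ℓ ≤ x → c x = ℓ := fun x hx => by
    rw [hc]; simp only; rw [min_eq_left hx, max_eq_right (by linarith)]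
  have h2 : ∀ x, x ≤ -ℓ → c x = -ℓ := fun x hx => by
    rw [hc]; simp only; rw [min_eq_right (by linarith), max_eq_left hx]
  have h3 : ∀ x ∈ Icc (-ℓ) ℓ, c x = x := fun x hx => by
    rw [hc]; simp only; rw [min_eq_right hx.2, max_eq_right hx.1]
  have hu : ∀ g : ℝ → ℝ, Continuous g → (∀ x, g x ∈ Icc (-ℓ) ℓ) →
      ContinuousOn (fun q : ℝ × ℝ => u q.1 (g q.2)) (Ico 0 τ ×ˢ Ioo (-(3 * ℓ)) (3 * ℓ)) :=
    fun g hg hm => hcont.comp (f := fun q : ℝ × ℝ => (q.1, g q.2)) (by fun_prop)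
      (fun q hq => ⟨Ico_subset_Icc_self hq.1, hm _⟩)
  have hform : ContinuousOn (fun q : ℝ × ℝ => u q.1 (c q.2) +
      (u q.1 ℓ - u q.1 (c (2 * ℓ - q.2))) + (u q.1 (-ℓ) - u q.1 (c (-(2 * ℓ) - q.2))))
      (Ico 0 τ ×ˢ Ioo (-(3 * ℓ)) (3 * ℓ)) :=
    ((hu c hcc hcm).add ((hu (fun _ => ℓ) continuous_const fun _ => ⟨by linarith, le_rfl⟩).sub
      (hu (fun x => c (2 * ℓ - x)) (by fun_prop) fun _ => hcm _))).add
      ((hu (fun _ => -ℓ) continuous_const fun _ => ⟨le_rfl, by linarith⟩).sub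
      (hu (fun x => c (-(2 * ℓ) - x)) (by fun_prop) fun _ => hcm _))
  refine hform.congr ?_
  rintro ⟨t, x⟩ ⟨-, hx⟩
  simp only
  simp only at hx
  rcases lt_or_ge ℓ x with h | h
  · rw [oddExt_right hl h.le, h1 x h.le, h2 (-(2 * ℓ) - x) (by linarith),
      h3 (2 * ℓ - x) ⟨by linarith [hx.2], by linarith⟩]
    ring
  rcases lt_or_ge x (-ℓ) with h' | h'
  · rw [oddExt_left hl h'.le, h2 x h'.le, h1 (2 * ℓ - x) (by linarith),
      h3 (-(2 * ℓ) - x) ⟨by linarith, by linarith [hx.1]⟩]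
    ring
  · rw [oddExt_mid ⟨h', h⟩, h3 x ⟨h', h⟩, h1 (2 * ℓ - x) (by linarith),
      h2 (-(2 * ℓ) - x) (by linarith)]
    ring

lemma hasDerivWithinAt_reflect_right {h : ℝ → ℝ} {d x : ℝ}
    (hd : HasDerivWithinAt h d (Icc (-ℓ) ℓ) (2 * ℓ - x)) :
    HasDerivWithinAt (fun y => h (2 * ℓ - y)) (-d) (Icc ℓ (3 * ℓ)) x := by
  have := HasDerivWithinAt.comp (h₂ := h) x hd
    ((hasDerivAt_id x).const_sub (2 * ℓ)).hasDerivWithinAt (s := Icc ℓ (3 * ℓ))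
    (fun y hy => ⟨by linarith [hy.2], by linarith [hy.1]⟩)
  simpa [Function.comp_def] using this

lemma hasDerivWithinAt_reflect_left {h : ℝ → ℝ} {d x : ℝ}
    (hd : HasDerivWithinAt h d (Icc (-ℓ) ℓ) (-(2 * ℓ) - x)) :
    HasDerivWithinAt (fun y => h (-(2 * ℓ) - y)) (-d) (Icc (-(3 * ℓ)) (-ℓ)) x := by
  have := HasDerivWithinAt.comp (h₂ := h) x hd
    ((hasDerivAt_id x).const_sub (-(2 * ℓ))).hasDerivWithinAt (s := Icc (-(3 * ℓ)) (-ℓ))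
    (fun y hy => ⟨by linarith [hy.2], by linarith [hy.1]⟩)
  simpa [Function.comp_def] using this

lemma oddExt_hasDerivAt (hl : 0 < ℓ) {u v : ℝ → ℝ → ℝ} {t : ℝ}
    (hv : ∀ x ∈ Icc (-ℓ) ℓ, HasDerivWithinAt (u t) (v t x) (Icc (-ℓ) ℓ) x) {x : ℝ}
    (hx : x ∈ Ioo (-(3 * ℓ)) (3 * ℓ)) :
    HasDerivAt (oddExt ℓ u t) (v t (foldPt ℓ x)) x := by
  have hM : ∀ x ∈ Icc (-ℓ) ℓ,
      HasDerivWithinAt (oddExt ℓ u t) (v t (foldPt ℓ x)) (Icc (-ℓ) ℓ) x := fun x hx => by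
    rw [foldPt_mid hx]
    exact (hv x hx).congr (fun y hy => oddExt_mid hy) (oddExt_mid hx)
  have hR : ∀ x ∈ Icc ℓ (3 * ℓ),
      HasDerivWithinAt (oddExt ℓ u t) (v t (foldPt ℓ x)) (Icc ℓ (3 * ℓ)) x := fun x hx => by
    rw [foldPt_right hl hx.1]
    have h1 := (hasDerivWithinAt_reflect_right
      (hv (2 * ℓ - x) ⟨by linarith [hx.2], by linarith [hx.1]⟩)).const_sub (2 * u t ℓ)
    rw [neg_neg] at h1
    exact h1.congr (fun y hy => oddExt_right hl hy.1) (oddExt_right hl hx.1)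
  have hL : ∀ x ∈ Icc (-(3 * ℓ)) (-ℓ),
      HasDerivWithinAt (oddExt ℓ u t) (v t (foldPt ℓ x)) (Icc (-(3 * ℓ)) (-ℓ)) x :=
    fun x hx => by
    rw [foldPt_left hl hx.2]
    have h1 := (hasDerivWithinAt_reflect_left
      (hv (-(2 * ℓ) - x) ⟨by linarith [hx.2], by linarith [hx.1]⟩)).const_sub (2 * u t (-ℓ))
    rw [neg_neg] at h1
    exact h1.congr (fun y hy => oddExt_left hl hy.2) (oddExt_left hl hx.2)
  rcases lt_trichotomy x ℓ with h | h | h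
  · rcases lt_trichotomy x (-ℓ) with h' | h' | h'
    · exact (hL x ⟨hx.1.le, h'.le⟩).hasDerivAt (Icc_mem_nhds hx.1 h')
    · have h1 := (hL x ⟨hx.1.le, h'.le⟩).union (hM x ⟨h'.ge, h.le⟩)
      rw [Icc_union_Icc_eq_Icc (by linarith) (by linarith)] at h1
      exact h1.hasDerivAt (Icc_mem_nhds hx.1 h)
    · exact (hM x ⟨h'.le, h.le⟩).hasDerivAt (Icc_mem_nhds h' h)
  · have h1 := (hM x ⟨by linarith, h.le⟩).union (hR x ⟨h.ge, hx.2.le⟩)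
    rw [Icc_union_Icc_eq_Icc (by linarith) (by linarith)] at h1
    exact h1.hasDerivAt (Icc_mem_nhds (by linarith) hx.2)
  · exact (hR x ⟨h.le, hx.2.le⟩).hasDerivAt (Icc_mem_nhds h hx.2)

/-- The reflected solution satisfies the parabolic inequality with right-hand side `3F`: beyond `ℓ` the
left-hand side is `2 u_t(t,ℓ) - (u_t - A u_xx)(t, 2ℓ - x)`, and `u_t(t,ℓ)` is bounded. At `±ℓ` itself
the one-sided derivative of `u_x` from inside is used. -/
lemma oddExt_eqAt (hl : 0 < ℓ) {lam Lam F : ℝ} {u v w k : ℝ → ℝ → ℝ} {t : ℝ} (hF : 0 ≤ F)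
    (hw : ∀ x ∈ Icc (-ℓ) ℓ, HasDerivAt (fun s => u s x) (w t x) t)
    (hk : ∀ x ∈ Icc (-ℓ) ℓ, HasDerivWithinAt (v t) (k t x) (Icc (-ℓ) ℓ) x)
    (heq : ∀ x ∈ Icc (-ℓ) ℓ, ∃ A, lam ≤ A ∧ A ≤ Lam ∧ |w t x - A * k t x| ≤ F)
    (hb1 : |w t ℓ| ≤ F) (hb2 : |w t (-ℓ)| ≤ F) {x : ℝ} (hx : x ∈ Ioo (-(3 * ℓ)) (3 * ℓ)) :
    EqAt lam Lam (3 * F) (oddExt ℓ u) (fun t x => v t (foldPt ℓ x)) t x := by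
  have hlI : ℓ ∈ Icc (-ℓ) ℓ := ⟨by linarith, le_rfl⟩
  have hlI' : -ℓ ∈ Icc (-ℓ) ℓ := ⟨le_rfl, by linarith⟩
  rcases lt_or_ge ℓ x with h | h
  · have hm : 2 * ℓ - x ∈ Icc (-ℓ) ℓ := ⟨by linarith [hx.2], by linarith⟩
    obtain ⟨A, hA1, hA2, hA3⟩ := heq _ hm
    refine ⟨A, -k t (2 * ℓ - x), 2 * w t ℓ - w t (2 * ℓ - x), hA1, hA2, Or.inr ?_, ?_, ?_⟩
    · refine HasDerivWithinAt.mono_of_mem_nhdsWithin ?_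
        (Icc_mem_nhdsLE_of_mem (show x ∈ Ioc ℓ (3 * ℓ) from ⟨h, hx.2.le⟩))
      exact (hasDerivWithinAt_reflect_right (hk _ hm)).congr
        (fun y hy => by simp only; rw [foldPt_right hl hy.1]) (by simp only; rw [foldPt_right hl h.le])
    · have : (fun s => oddExt ℓ u s x) = fun s => 2 * u s ℓ - u s (2 * ℓ - x) :=
        funext fun s => oddExt_right hl h.le
      rw [this]
      exact ((hw ℓ hlI).const_mul 2).sub (hw _ hm)
    · rw [abs_le] at *
      constructor <;> nlinarith
  rcases lt_or_ge x (-ℓ) with h' | h'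
  · have hm : -(2 * ℓ) - x ∈ Icc (-ℓ) ℓ := ⟨by linarith, by linarith [hx.1]⟩
    obtain ⟨A, hA1, hA2, hA3⟩ := heq _ hm
    refine ⟨A, -k t (-(2 * ℓ) - x), 2 * w t (-ℓ) - w t (-(2 * ℓ) - x), hA1, hA2, Or.inl ?_, ?_,
      ?_⟩
    · refine HasDerivWithinAt.mono_of_mem_nhdsWithin ?_
        (Icc_mem_nhdsGE_of_mem (show x ∈ Ico (-(3 * ℓ)) (-ℓ) from ⟨hx.1.le, h'⟩))
      exact (hasDerivWithinAt_reflect_left (hk _ hm)).congr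
        (fun y hy => by simp only; rw [foldPt_left hl hy.2]) (by simp only; rw [foldPt_left hl h'.le])
    · have : (fun s => oddExt ℓ u s x) = fun s => 2 * u s (-ℓ) - u s (-(2 * ℓ) - x) :=
        funext fun s => oddExt_left hl h'.le
      rw [this]
      exact ((hw (-ℓ) hlI').const_mul 2).sub (hw _ hm)
    · rw [abs_le] at *
      constructor <;> nlinarith
  · have hm : x ∈ Icc (-ℓ) ℓ := ⟨h', h⟩
    obtain ⟨A, hA1, hA2, hA3⟩ := heq _ hm
    have hd : HasDerivWithinAt (fun y => v t (foldPt ℓ y)) (k t x) (Icc (-ℓ) ℓ) x :=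
      (hk x hm).congr (fun y hy => by rw [foldPt_mid hy]) (by rw [foldPt_mid hm])
    refine ⟨A, k t x, w t x, hA1, hA2, ?_, ?_, hA3.trans (by linarith)⟩
    · rcases h'.lt_or_eq with h2 | h2
      · exact Or.inr (hd.mono_of_mem_nhdsWithin (Icc_mem_nhdsLE_of_mem ⟨h2, h⟩))
      · exact Or.inl (hd.mono_of_mem_nhdsWithin (Icc_mem_nhdsGE_of_mem ⟨h', by linarith⟩))
    · have : (fun s => oddExt ℓ u s x) = fun s => u s x := funext fun s => oddExt_mid hm
      rw [this]
      exact hw x hm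

lemma oddExt_extSol (hl : 0 < ℓ) {lam Lam F C0 α τ : ℝ} {u v w k : ℝ → ℝ → ℝ} (hF : 0 ≤ F)
    (hC0 : 0 ≤ C0) (hα : 0 < α)
    (hcont : ContinuousOn (fun q : ℝ × ℝ => u q.1 q.2) (Icc 0 τ ×ˢ Icc (-ℓ) ℓ))
    (hw : ∀ t ∈ Ioo 0 τ, ∀ x ∈ Icc (-ℓ) ℓ, HasDerivAt (fun s => u s x) (w t x) t)
    (hv : ∀ t ∈ Ico 0 τ, ∀ x ∈ Icc (-ℓ) ℓ, HasDerivWithinAt (u t) (v t x) (Icc (-ℓ) ℓ) x)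
    (hk : ∀ t ∈ Ioo 0 τ, ∀ x ∈ Icc (-ℓ) ℓ, HasDerivWithinAt (v t) (k t x) (Icc (-ℓ) ℓ) x)
    (heq : ∀ t ∈ Ioo 0 τ, ∀ x ∈ Icc (-ℓ) ℓ, ∃ A, lam ≤ A ∧ A ≤ Lam ∧ |w t x - A * k t x| ≤ F)
    (hb : ∀ t ∈ Ioo 0 τ, |w t ℓ| ≤ F ∧ |w t (-ℓ)| ≤ F)
    (h0 : ∀ x ∈ Icc (-ℓ) ℓ, ∀ y ∈ Icc (-ℓ) ℓ, |v 0 x - v 0 y| ≤ C0 * |x - y| ^ α) :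
    ExtSol lam Lam (3 * F) C0 α ℓ τ (oddExt ℓ u) (fun t x => v t (foldPt ℓ x)) where
  cont := oddExt_continuousOn hl hcont
  der t ht _ hx := oddExt_hasDerivAt hl (hv t ht) hx
  eqn t ht _ hx := oddExt_eqAt hl hF (hw t ht) (hk t ht) (heq t ht) (hb t ht).1 (hb t ht).2 hx
  init x hx y hy := (h0 _ (foldPt_mem hx) _ (foldPt_mem hy)).trans
    (mul_le_mul_of_nonneg_left
      (Real.rpow_le_rpow (abs_nonneg _) (foldPt_lipschitz hl x y) hα.le) hC0)

end Reflection

/-! ### Hölder estimate up to the boundary -/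

/-- A bound in the open cylinder extends to the closed one by continuity. -/
lemma abs_le_of_closure {τ ℓ M : ℝ} (hτ : 0 < τ) (hl : 0 < ℓ) {h : ℝ → ℝ → ℝ}
    (hc : ContinuousOn (fun q : ℝ × ℝ => h q.1 q.2) (Icc 0 τ ×ˢ Icc (-ℓ) ℓ))
    (hb : ∀ t ∈ Ioo 0 τ, ∀ x ∈ Ioo (-ℓ) ℓ, |h t x| ≤ M) :
    ∀ t ∈ Icc 0 τ, ∀ x ∈ Icc (-ℓ) ℓ, |h t x| ≤ M := by
  intro t ht x hx
  have hcl : (t, x) ∈ closure (Ioo 0 τ ×ˢ Ioo (-ℓ) ℓ) := by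
    rw [closure_prod_eq, closure_Ioo hτ.ne, closure_Ioo (by linarith)]
    exact ⟨ht, hx⟩
  have hsub : Ioo 0 τ ×ˢ Ioo (-ℓ) ℓ ⊆ Icc 0 τ ×ˢ Icc (-ℓ) ℓ :=
    prod_mono Ioo_subset_Icc_self Ioo_subset_Icc_self
  exact ContinuousWithinAt.closure_le (f := fun q : ℝ × ℝ => |h q.1 q.2|) (g := fun _ => M) hcl
    ((hc.abs (t, x) ⟨ht, hx⟩).mono hsub) continuousWithinAt_const (fun q hq => hb _ hq.1 _ hq.2)

lemma continuousOn_of_holder {α C : ℝ} (hα : 0 < α) {I : Set ℝ} {h : ℝ → ℝ}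
    (hH : ∀ s ∈ I, ∀ s' ∈ I, |h s - h s'| ≤ C * |s - s'| ^ α) : ContinuousOn h I := by
  intro x hx
  rw [ContinuousWithinAt, tendsto_iff_dist_tendsto_zero]
  have hc : Continuous fun y : ℝ => C * |y - x| ^ α :=
    continuous_const.mul ((continuous_id.sub continuous_const).abs.rpow_const
      fun _ => Or.inr hα.le)
  have h0 : Tendsto (fun y : ℝ => C * |y - x| ^ α) (𝓝[I] x) (𝓝 0) := by
    have := (hc.tendsto x).mono_left (nhdsWithin_le_nhds (s := I))
    simpa [Real.zero_rpow hα.ne'] using this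
  refine squeeze_zero' (Eventually.of_forall fun _ => dist_nonneg) ?_ h0
  filter_upwards [self_mem_nhdsWithin] with y hy
  rw [Real.dist_eq]
  exact hH y hy x hx

lemma exists_abs_bound {X : Type*} [TopologicalSpace X] {S : Set X} (hS : IsCompact S)
    {h : X → ℝ} (hc : ContinuousOn h S) : ∃ C, 0 ≤ C ∧ ∀ x ∈ S, |h x| ≤ C := by
  obtain ⟨C, hC⟩ := hS.exists_bound_of_continuousOn hc
  exact ⟨max C 0, le_max_right _ _, fun x hx => (hC x hx).trans (le_max_left _ _)⟩

/-- Corollary 3.4: Hölder estimate on the gradient of bounded classical solutions of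
(1), (2) under the hypotheses of Theorem 3.1, with `u⁰ ∈ C^{1+α}([-ℓ,ℓ])`. -/
theorem holder_gradient_estimate
    (α T ℓ K M q₀ : ℝ) (ψ : ℝ → ℝ) (a f b g : ℝ → ℝ → ℝ → ℝ → ℝ) (u0 : ℝ → ℝ)
    (hα : α ∈ Ioo (0:ℝ) 1) (hT : 0 < T) (hl : 0 < ℓ) (hM : 0 < M)
    (hK : 0 ≤ K) (hKq : K ≤ q₀)
    (ha_cont : ContinuousOn (fun q : ℝ × ℝ × ℝ × ℝ => a q.1 q.2.1 q.2.2.1 q.2.2.2)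
      (Icc (0:ℝ) T ×ˢ Icc (-ℓ) ℓ ×ˢ (univ : Set (ℝ × ℝ))))
    (hf_cont : ContinuousOn (fun q : ℝ × ℝ × ℝ × ℝ => f q.1 q.2.1 q.2.2.1 q.2.2.2)
      (Icc (0:ℝ) T ×ˢ Icc (-ℓ) ℓ ×ˢ (univ : Set (ℝ × ℝ))))
    (hb_cont : ContinuousOn (fun q : ℝ × ℝ × ℝ => b q.1 ℓ q.2.1 q.2.2)
        (Icc (0:ℝ) T ×ˢ (univ : Set (ℝ × ℝ))) ∧
      ContinuousOn (fun q : ℝ × ℝ × ℝ => b q.1 (-ℓ) q.2.1 q.2.2)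
        (Icc (0:ℝ) T ×ˢ (univ : Set (ℝ × ℝ))))
    (hg_cont : ContinuousOn (fun q : ℝ × ℝ × ℝ => g q.1 ℓ q.2.1 q.2.2)
        (Icc (0:ℝ) T ×ˢ (univ : Set (ℝ × ℝ))) ∧
      ContinuousOn (fun q : ℝ × ℝ × ℝ => g q.1 (-ℓ) q.2.1 q.2.2)
        (Icc (0:ℝ) T ×ˢ (univ : Set (ℝ × ℝ))))
    (hapos : ∀ t ∈ Icc (0:ℝ) T, ∀ x ∈ Icc (-ℓ) ℓ, ∀ z p : ℝ, 0 < a t x z p)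
    (hbpos : ∀ t ∈ Icc (0:ℝ) T, ∀ z p : ℝ, 0 < b t ℓ z p ∧ 0 < b t (-ℓ) z p)
    (hu0 : ContinuousOn u0 (Icc (-ℓ) ℓ) ∧ (∀ x ∈ Icc (-ℓ) ℓ, DifferentiableAt ℝ u0 x) ∧
      ∃ C : ℝ, HolderBnd α (Icc (-ℓ) ℓ) (deriv u0) C)
    (hLip : ∀ x ∈ Icc (-ℓ) ℓ, ∀ y ∈ Icc (-ℓ) ℓ, |u0 x - u0 y| ≤ K * |x - y|)
    (hψreg : ContDiffOn ℝ 1 ψ (Ici 0)) (hψ1 : ∀ ρ ∈ Ici (0:ℝ), 1 ≤ ψ ρ)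
    (hint : ∃ q₁ : ℝ, q₀ < q₁ ∧ 2 * M < ∫ ρ in q₀..q₁, ρ / ψ ρ)
    (hfa : ∀ t ∈ Icc (0:ℝ) T, ∀ x ∈ Icc (-ℓ) ℓ, ∀ z ∈ Icc (-M) M, ∀ p : ℝ,
      |f t x z p| ≤ a t x z p * ψ (|p|))
    (hbg : ∀ t ∈ Ioc (0:ℝ) T, ∀ z ∈ Icc (-M) M, ∀ p : ℝ, q₀ ≤ p →
      g t ℓ z p ≤ b t ℓ z p * p ∧ -g t ℓ z (-p) ≤ b t ℓ z (-p) * p ∧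
      -g t (-ℓ) z p ≤ b t (-ℓ) z p * p ∧ g t (-ℓ) z (-p) ≤ b t (-ℓ) z (-p) * p) :
    ∃ δ : ℝ, 0 < δ ∧ δ ≤ α ∧ ∃ Cstar : ℝ,
      ∀ τ : ℝ, 0 < τ → τ ≤ T → ∀ u : ℝ → ℝ → ℝ, SolQ τ ℓ a f b g u0 u →
        Reg12 τ (Icc (-ℓ) ℓ) u →
        ContinuousOn (fun p : ℝ × ℝ => timeDeriv u p.1 p.2) (Icc 0 τ ×ˢ Icc (-ℓ) ℓ) →
        ContinuousOn (fun p : ℝ × ℝ => spaceDeriv u p.1 p.2) (Icc 0 τ ×ˢ Icc (-ℓ) ℓ) →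
        ContinuousOn (fun p : ℝ × ℝ => spaceDeriv2 u p.1 p.2) (Icc 0 τ ×ˢ Icc (-ℓ) ℓ) →
        (∀ t ∈ Ioo (0:ℝ) τ, ∀ x ∈ Ioo (-ℓ) ℓ, |u t x| ≤ M) →
        PHolderBnd δ τ (Ioo (-ℓ) ℓ) (spaceDeriv u) Cstar := by
  obtain ⟨q₁, hq, hI⟩ := hint
  have hq0 : 0 ≤ q₀ := hK.trans hKq
  have hq1 : 0 < q₁ := hq0.trans_lt hq
  have hsub : Icc q₀ q₁ ⊆ Ici 0 := fun ρ hρ => hq0.trans hρ.1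
  obtain ⟨s1, φ, p, p', hs1, hφ, hp, hφ0, hp0, hφ1, hpq⟩ := exists_barrier hM hq
    (hψreg.continuousOn.mono hsub) (fun ρ hρ => hψ1 ρ (hsub hρ)) hI
  -- bounds for the coefficients on the compact set of values that a solution can take
  have hS : IsCompact (Icc 0 T ×ˢ Icc (-ℓ) ℓ ×ˢ (Icc (-M) M ×ˢ Icc (-q₁) q₁)) :=
    isCompact_Icc.prod (isCompact_Icc.prod (isCompact_Icc.prod isCompact_Icc))
  have hSb : IsCompact (Icc 0 T ×ˢ (Icc (-M) M ×ˢ Icc (-q₁) q₁)) :=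
    isCompact_Icc.prod (isCompact_Icc.prod isCompact_Icc)
  have hSsub : Icc 0 T ×ˢ Icc (-ℓ) ℓ ×ˢ (Icc (-M) M ×ˢ Icc (-q₁) q₁) ⊆
      Icc 0 T ×ˢ Icc (-ℓ) ℓ ×ˢ (univ : Set (ℝ × ℝ)) :=
    prod_mono subset_rfl (prod_mono subset_rfl (subset_univ _))
  have hSbsub : Icc 0 T ×ˢ (Icc (-M) M ×ˢ Icc (-q₁) q₁) ⊆
      Icc 0 T ×ˢ (univ : Set (ℝ × ℝ)) := prod_mono subset_rfl (subset_univ _)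
  have hne : (Icc 0 T ×ˢ Icc (-ℓ) ℓ ×ˢ (Icc (-M) M ×ˢ Icc (-q₁) q₁)).Nonempty :=
    ⟨(0, 0, 0, 0), ⟨le_rfl, hT.le⟩, ⟨by linarith, hl.le⟩, ⟨by linarith, hM.le⟩,
      ⟨by linarith, hq1.le⟩⟩
  obtain ⟨lam, hlam, hlamle⟩ : ∃ lam, 0 < lam ∧ ∀ t ∈ Icc 0 T, ∀ x ∈ Icc (-ℓ) ℓ,
      ∀ z ∈ Icc (-M) M, ∀ r ∈ Icc (-q₁) q₁, lam ≤ a t x z r := by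
    obtain ⟨q, hqS, hqmin⟩ := hS.exists_isMinOn hne (ha_cont.mono hSsub)
    exact ⟨_, hapos q.1 hqS.1 q.2.1 hqS.2.1 q.2.2.1 q.2.2.2, fun t ht x hx z hz r hr =>
      hqmin (show (t, x, z, r) ∈ _ from ⟨ht, hx, hz, hr⟩)⟩
  obtain ⟨Lam', -, hLam'⟩ := exists_abs_bound hS (ha_cont.mono hSsub)
  obtain ⟨F1, hF1, hF1b⟩ := exists_abs_bound hS (hf_cont.mono hSsub)
  obtain ⟨B1, hB1, hB1b⟩ := exists_abs_bound hSb (hb_cont.1.mono hSbsub)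
  obtain ⟨B2, hB2, hB2b⟩ := exists_abs_bound hSb (hb_cont.2.mono hSbsub)
  obtain ⟨G1, hG1, hG1b⟩ := exists_abs_bound hSb (hg_cont.1.mono hSbsub)
  obtain ⟨G2, hG2, hG2b⟩ := exists_abs_bound hSb (hg_cont.2.mono hSbsub)
  obtain ⟨Lam, hLam⟩ : ∃ Lam, Lam = max lam Lam' := ⟨_, rfl⟩
  obtain ⟨F, hF⟩ : ∃ F, F = F1 + (G1 + B1 * q₁) + (G2 + B2 * q₁) := ⟨_, rfl⟩
  have hBq1 : 0 ≤ B1 * q₁ := mul_nonneg hB1 hq1.le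
  have hBq2 : 0 ≤ B2 * q₁ := mul_nonneg hB2 hq1.le
  have hF0 : 0 ≤ F := by rw [hF]; linarith
  obtain ⟨hu0c, hu0d, C', hC'⟩ := hu0
  obtain ⟨C0, hC0⟩ : ∃ C0, C0 = max C' 0 := ⟨_, rfl⟩
  have hC00 : 0 ≤ C0 := hC0 ▸ le_max_right _ _
  obtain ⟨δ, hδ, hδα, C, hC, hmain⟩ := holder_of_extSol (lam := lam) (Lam := Lam) (F := 3 * F)
    (C0 := C0) (α := α) (L := ℓ) (V0 := q₁) hlam (hLam ▸ le_max_left _ _) (by linarith) hC00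
    hα.1 hl hq1.le
  refine ⟨δ, hδ, hδα, C, fun τ hτ hτT u hsol hreg hcw hcv hck huM => ?_⟩
  obtain ⟨⟨hcont, -, -⟩, hpde, hbc, hini⟩ := hsol
  have huM' := abs_le_of_closure hτ hl hcont huM
  have hIoo : ∀ t ∈ Ioo 0 τ, t ∈ Icc 0 T := fun t ht => ⟨ht.1.le, ht.2.le.trans hτT⟩
  have hlI : ℓ ∈ Icc (-ℓ) ℓ := ⟨by linarith, le_rfl⟩
  have hlI' : -ℓ ∈ Icc (-ℓ) ℓ := ⟨le_rfl, by linarith⟩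
  have hz : ∀ t ∈ Ioo 0 τ, ∀ x ∈ Icc (-ℓ) ℓ, u t x ∈ Icc (-M) M := fun t ht x hx =>
    abs_le.1 (huM' t (Ioo_subset_Icc_self ht) x hx)
  have hw : ∀ t ∈ Ioo 0 τ, ∀ x ∈ Icc (-ℓ) ℓ, HasDerivAt (fun s => u s x) (timeDeriv u t x) t :=
    fun t ht x hx => (hreg t ht x hx).1.hasDerivAt
  have hv : ∀ t ∈ Ioo 0 τ, ∀ x ∈ Icc (-ℓ) ℓ, HasDerivAt (u t) (spaceDeriv u t x) x :=
    fun t ht x hx => (hreg t ht x hx).2.1.hasDerivAt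
  have hk : ∀ t ∈ Ioo 0 τ, ∀ x ∈ Icc (-ℓ) ℓ,
      HasDerivAt (spaceDeriv u t) (spaceDeriv2 u t x) x :=
    fun t ht x hx => (hreg t ht x hx).2.2.hasDerivAt
  -- the boundary condition determines the sign of `u_t(t, ±ℓ)` when `|u_x| ≥ q₀`
  have hgrad : ∀ t ∈ Ioo 0 τ, ∀ x ∈ Icc (-ℓ) ℓ, |spaceDeriv u t x| ≤ q₁ := by
    refine gradient_bound hl hq0 hs1 hφ hp hφ0 hp0 hφ1
      (fun s hs => ⟨(hpq s hs).1, (hpq s hs).2.2⟩) hcont hw hv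
      (fun t ht x hx => hk t ht x (Ioo_subset_Icc_self hx)) (fun t ht x hx => ?_)
      (fun t ht h => ?_) (fun t ht h => ?_) (fun t ht h => ?_) (fun t ht h => ?_) huM'
      (fun x hx y hy => ?_)
    · have hx' := Ioo_subset_Icc_self hx
      refine ⟨_, hapos t (hIoo t ht) x hx' (u t x) (spaceDeriv u t x), ?_⟩
      rw [hpde t ht x hx]
      exact hfa t (hIoo t ht) x hx' _ (hz t ht x hx') _
    · have h1 := (hbg t ⟨ht.1, ht.2.le.trans hτT⟩ _ (hz t ht ℓ hlI) _ h).1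
      linarith [(hbc t ht).1]
    · have h1 := (hbg t ⟨ht.1, ht.2.le.trans hτT⟩ _ (hz t ht (-ℓ) hlI') _ h).2.2.1
      linarith [(hbc t ht).2]
    · have h1 := (hbg t ⟨ht.1, ht.2.le.trans hτT⟩ _ (hz t ht ℓ hlI) (-spaceDeriv u t ℓ)
        (by linarith)).2.1
      rw [neg_neg] at h1
      linarith [(hbc t ht).1]
    · have h1 := (hbg t ⟨ht.1, ht.2.le.trans hτT⟩ _ (hz t ht (-ℓ) hlI')
        (-spaceDeriv u t (-ℓ)) (by linarith)).2.2.2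
      rw [neg_neg] at h1
      linarith [(hbc t ht).2]
    · rw [hini x hx, hini y hy]
      exact (hLip x hx y hy).trans (mul_le_mul_of_nonneg_right hKq (abs_nonneg _))
  have hr : ∀ t ∈ Ioo 0 τ, ∀ x ∈ Icc (-ℓ) ℓ, spaceDeriv u t x ∈ Icc (-q₁) q₁ :=
    fun t ht x hx => abs_le.1 (hgrad t ht x hx)
  have hgrad' := abs_le_of_closure hτ hl hcv
    fun t ht x hx => hgrad t ht x (Ioo_subset_Icc_self hx)
  have hIcl : Icc (-ℓ) ℓ ⊆ closure (Ioo (-ℓ) ℓ) := by rw [closure_Ioo (by linarith)]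
  -- restriction of a continuous function on the cylinder to a time slice
  have hslice : ∀ h : ℝ → ℝ → ℝ,
      ContinuousOn (fun q : ℝ × ℝ => h q.1 q.2) (Icc 0 τ ×ˢ Icc (-ℓ) ℓ) →
      ∀ t ∈ Icc 0 τ, ContinuousOn (h t) (Icc (-ℓ) ℓ) := fun h hh t ht =>
    hh.comp (f := fun x => (t, x)) (by fun_prop) fun x hx => ⟨ht, hx⟩
  -- by continuity the equation holds up to the lateral boundary
  have hpde' : ∀ t ∈ Ioo 0 τ, ∀ x ∈ Icc (-ℓ) ℓ,
      timeDeriv u t x - a t x (u t x) (spaceDeriv u t x) * spaceDeriv2 u t x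
        = f t x (u t x) (spaceDeriv u t x) := by
    intro t ht
    have ht' := Ioo_subset_Icc_self ht
    have hmap : ContinuousOn (fun x => (t, x, u t x, spaceDeriv u t x)) (Icc (-ℓ) ℓ) :=
      continuousOn_const.prodMk (continuousOn_id.prodMk
        ((hslice u hcont t ht').prodMk (hslice _ hcv t ht')))
    have hmaps : MapsTo (fun x => (t, x, u t x, spaceDeriv u t x)) (Icc (-ℓ) ℓ)
        (Icc (0:ℝ) T ×ˢ Icc (-ℓ) ℓ ×ˢ (univ : Set (ℝ × ℝ))) :=
      fun x hx => ⟨hIoo t ht, hx, mem_univ _⟩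
    exact EqOn.of_subset_closure (hpde t ht)
      ((hslice _ hcw t ht').sub ((ha_cont.comp hmap hmaps).mul (hslice _ hck t ht')))
      (hf_cont.comp hmap hmaps) Ioo_subset_Icc_self hIcl
  -- `u_x(0, ·)` is the derivative of the initial value up to the boundary
  have hv0 : ∀ x ∈ Icc (-ℓ) ℓ, spaceDeriv u 0 x = deriv u0 x := by
    refine EqOn.of_subset_closure (s := Ioo (-ℓ) ℓ) (fun x hx => ?_)
      (hslice _ hcv 0 ⟨le_rfl, hτ.le⟩) (continuousOn_of_holder hα.1 hC') Ioo_subset_Icc_self hIcl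
    refine EventuallyEq.deriv_eq ?_
    filter_upwards [Icc_mem_nhds hx.1 hx.2] with y hy using hini y hy
  have hext := oddExt_extSol (ℓ := ℓ) (lam := lam) (Lam := Lam) (F := F) (C0 := C0) (α := α)
    (τ := τ) (u := u) (v := spaceDeriv u) (w := timeDeriv u) (k := spaceDeriv2 u) hl hF0 hC00 hα.1
    hcont hw
    (fun t ht x hx => by
      rcases ht.1.lt_or_eq with h | h
      · exact (hv t ⟨h, ht.2⟩ x hx).hasDerivWithinAt
      · rw [← h, hv0 x hx]
        exact (hu0d x hx).hasDerivAt.hasDerivWithinAt.congr hini (hini x hx))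
    (fun t ht x hx => (hk t ht x hx).hasDerivWithinAt)
    (fun t ht x hx => by
      have hmem : (t, x, u t x, spaceDeriv u t x) ∈
          Icc 0 T ×ˢ Icc (-ℓ) ℓ ×ˢ (Icc (-M) M ×ˢ Icc (-q₁) q₁) :=
        ⟨hIoo t ht, hx, hz t ht x hx, hr t ht x hx⟩
      refine ⟨a t x (u t x) (spaceDeriv u t x), hlamle _ (hIoo t ht) _ hx _ (hz t ht x hx) _
        (hr t ht x hx), ?_, ?_⟩
      · rw [hLam]
        exact ((le_abs_self _).trans (hLam' _ hmem)).trans (le_max_right _ _)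
      · rw [hpde' t ht x hx]
        refine (hF1b _ hmem).trans ?_
        rw [hF]; linarith)
    (fun t ht => by
      have hm1 : (t, u t ℓ, spaceDeriv u t ℓ) ∈ Icc 0 T ×ˢ (Icc (-M) M ×ˢ Icc (-q₁) q₁) :=
        ⟨hIoo t ht, hz t ht ℓ hlI, hr t ht ℓ hlI⟩
      have hm2 : (t, u t (-ℓ), spaceDeriv u t (-ℓ)) ∈
          Icc 0 T ×ˢ (Icc (-M) M ×ˢ Icc (-q₁) q₁) :=
        ⟨hIoo t ht, hz t ht (-ℓ) hlI', hr t ht (-ℓ) hlI'⟩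
      have hp1 : |b t ℓ (u t ℓ) (spaceDeriv u t ℓ) * spaceDeriv u t ℓ| ≤ B1 * q₁ := by
        rw [abs_mul]
        exact mul_le_mul (hB1b _ hm1) (hgrad t ht ℓ hlI) (abs_nonneg _) hB1
      have hp2 : |b t (-ℓ) (u t (-ℓ)) (spaceDeriv u t (-ℓ)) * spaceDeriv u t (-ℓ)| ≤
          B2 * q₁ := by
        rw [abs_mul]
        exact mul_le_mul (hB2b _ hm2) (hgrad t ht (-ℓ) hlI') (abs_nonneg _) hB2
      have hg1 : |g t ℓ (u t ℓ) (spaceDeriv u t ℓ)| ≤ G1 := hG1b _ hm1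
      have hg2 : |g t (-ℓ) (u t (-ℓ)) (spaceDeriv u t (-ℓ))| ≤ G2 := hG2b _ hm2
      have e1 := (hbc t ht).1
      have e2 := (hbc t ht).2
      rw [abs_le] at hp1 hp2 hg1 hg2
      constructor <;> rw [abs_le] <;> constructor <;>
        linarith [hp1.1, hp1.2, hp2.1, hp2.2, hg1.1, hg1.2, hg2.1, hg2.2])
    (fun x hx y hy => by
      rw [hv0 x hx, hv0 y hy]
      exact (hC' x hx y hy).trans (mul_le_mul_of_nonneg_right (hC0 ▸ le_max_left _ _)
        (Real.rpow_nonneg (abs_nonneg _) _)))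
  have hfin := hmain τ _ _ hext
    (fun t ht x hx => hgrad' t (Ico_subset_Icc_self ht) _ (foldPt_mem hx))
  have hest : ∀ t ∈ Ioo 0 τ, ∀ x ∈ Icc (-ℓ) ℓ, ∀ s ∈ Ioc 0 t, ∀ y ∈ Icc (-ℓ) ℓ, ∀ d, 0 < d →
      |y - x| ≤ d → t - s ≤ d ^ 2 →
      |spaceDeriv u t x - spaceDeriv u s y| ≤ C * d ^ δ := by
    intro t ht x hx s hs y hy d hd h1 h2
    have := hfin t ht x hx s hs y hy d hd h1 h2
    rwa [foldPt_mid hx, foldPt_mid hy] at this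
  -- parabolic distance `√(t - s)` for the time seminorm, `|x - y|` for the space seminorm
  constructor
  · intro x hx
    have hx' := Ioo_subset_Icc_self hx
    have hle : ∀ t ∈ Ioo 0 τ, ∀ s ∈ Ioo 0 τ, s < t →
        |spaceDeriv u t x - spaceDeriv u s x| ≤ C * |t - s| ^ (δ / 2) := by
      intro t ht s hs hst
      have h := hest t ht x hx' s ⟨hs.1, hst.le⟩ x hx' (√(t - s))
        (Real.sqrt_pos.2 (by linarith)) (by simp) (Real.sq_sqrt (by linarith)).ge
      rwa [Real.sqrt_eq_rpow, ← Real.rpow_mul (by linarith), one_div_mul_eq_div,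
        ← abs_of_nonneg (show 0 ≤ t - s by linarith)] at h
    intro t ht s hs
    rcases lt_trichotomy s t with h | h | h
    · exact hle t ht s hs h
    · rw [h]; simp only [sub_self, abs_zero]; positivity
    · rw [abs_sub_comm, abs_sub_comm t s]; exact hle s hs t ht h
  · intro t ht x hx y hy
    rcases eq_or_ne x y with h | h
    · rw [h]; simp only [sub_self, abs_zero]; positivity
    · exact hest t ht x (Ioo_subset_Icc_self hx) t ⟨ht.1, le_rfl⟩ y (Ioo_subset_Icc_self hy)
        |x - y| (abs_pos.2 (sub_ne_zero.2 h)) (abs_sub_comm y x).le (by rw [sub_self]; positivity)
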